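/- Let σ, B₁, B₂ > 0, let m be a positive integer with m < 1/B₁, let r satisfy m√(2σ/π) < r ≤ (1 − mB₁)/(mB₂), and let f : ℝ^m → ℝ^m be twice continuously differentiable with |∂f_i/∂x_j(0)| ≤ B₁ for all i, j ∈ [m], and |∂²f_i/(∂x_j ∂x_{j'})(x)| ≤ B₂ for all i, j, j' ∈ [m] and all x with ‖x‖₁ < r. Let P be the law of X + f(X) where X ~ N(0, σ I_m). Then P is a ((1 − mB₁)²σ, ε)-blurring for ε = (4(m+2)m²B₂√(2σ/π)/(1 − mB₁) + 3m⁵B₂²σ/(1 − mB₁)²)/8 + (1 − (1 + mB₁)B₂mr)·e^{−(r/(2√σ) − m/√(2π))²/m}. -/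

import Mathlib

/-!
Write `a = 1 - m B₁`, `κ = B₂ / a`, `γ = N(0, σ I)` and `B = {‖x‖₁ < r}`.

*Reduction.* With `T = id + f'(0)`, which is invertible because `m B₁ < 1`, and `c = f 0`, one has
`x + f x = T (x + u x) + c`, where `u = T⁻¹ (f - f 0 - f'(0))` satisfies `u 0 = 0` and
`|∂_j u_i (x)| ≤ κ ‖x‖₁` on `B` (`exists_reduction`). The law of `T X + c` is a Gaussian with
covariance `σ T Tᵀ ≥ a² σ I`, so it is exactly of the form `Phat * N(0, a² σ I)` (`exists_blur`).
Since `x ↦ T x + c` does not increase total variation, it remains to bound the total variation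
distance between `γ` and its image under `h = id + u`.

*Change of variables.* On `B` the map `h` is injective (`injOn_of_bound`), as `m κ r ≤ 1`. Hence
`γ (h⁻¹ A) ≤ γ A + ∫_B G dγ + γ Bᶜ` for every `G` dominating the deficit
`1 - |det h'(x)| exp (-∑ i, (x_i u_i / σ + u_i² / (2σ)))` (`change_of_variables`).

*The deficit.* The determinant satisfies `det (1 + N) ≥ 1 - (m-1) c - ∑ i, (N i i)⁻` whenever all
entries are at most `c` and `m c < 1` (`one_sub_diag_le_det`). In the exponent, `x_i u_i` is split
into `x_i (u_i(x) - u_i(x with x_i = 0))` and a remainder controlled by Taylor's formula. Stein's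
inequality (`gaussPi_stein`), an integration by parts on each line segment of `B` parallel to an
axis, trades the first piece for `σ (∂_i u_i)⁺`, which recombines with the term `(∂_i u_i)⁻` from
the determinant into `|∂_i u_i| ≤ κ ‖x‖₁`. The contribution `m κ ‖x‖₁` on `B` is completed on
`Bᶜ`, where `1 ≤ (1 - m κ r) + m κ ‖x‖₁`, to `m κ E‖X‖₁` plus `(1 - m κ r) γ Bᶜ`
(`lintegral_defect_add_le`). A Chernoff bound controls `γ Bᶜ` (`gaussPi_tail`), and `eps_le`
compares the resulting constant with the stated one.
-/

open Finset MeasureTheory ProbabilityTheory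

/-- The Gaussian measure `N(μ, v·I_m)` on `ℝ^m` (each coordinate has variance `v`). -/
noncomputable def gaussPi (m : ℕ) (μ : Fin m → ℝ) (v : ℝ) : Measure (Fin m → ℝ) :=
  Measure.pi fun i => gaussianReal (μ i) v.toNNReal

/-- The convolution of two measures on `ℝ^m`. -/
noncomputable def conv (m : ℕ) (P Q : Measure (Fin m → ℝ)) : Measure (Fin m → ℝ) :=
  (P.prod Q).map fun p => p.1 + p.2

/-- Twice the total variation distance between two measures, i.e. the `L¹` distance
between their densities when they exist. -/
noncomputable def l1Dist {E : Type*} [MeasurableSpace E] (P Q : Measure E) : ℝ :=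
  2 * ⨆ A : {s : Set E // MeasurableSet s}, |(P A.1).toReal - (Q A.1).toReal|

/-- `P` is a `(σ, ε)`-blurring: there is a probability measure `P̂` with
`‖P − P̂ * N(0, σ I_m)‖₁ ≤ 2ε`. -/
def IsBlurring (m : ℕ) (σ ε : ℝ) (P : Measure (Fin m → ℝ)) : Prop :=
  ∃ Phat : Measure (Fin m → ℝ), IsProbabilityMeasure Phat ∧
    l1Dist P (conv m Phat (gaussPi m 0 σ)) ≤ 2 * ε

/-! ### Determinants of small perturbations of the identity -/

/-- Proved by one step of Gaussian elimination: the Schur complement of the top left entry has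
row bounds `c i / (1 - c 0)`, and the induction hypothesis loses nothing. -/
lemma one_sub_sum_le_det (n : ℕ) : ∀ (N : Matrix (Fin n) (Fin n) ℝ) (c : Fin n → ℝ),
    (∀ i j, |N i j| ≤ c i) → ∑ i, c i < 1 → 1 - ∑ i, c i ≤ (1 + N).det := by
  induction n with
  | zero => intro N c _ _; simp
  | succ n ih =>
    intro N c hN hc
    have hc0 : ∀ i, 0 ≤ c i := fun i => (abs_nonneg _).trans (hN i 0)
    rw [Fin.sum_univ_succ] at hc ⊢
    have hs : 0 ≤ ∑ i : Fin n, c i.succ := Finset.sum_nonneg fun i _ => hc0 _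
    have hd : 0 < 1 - c 0 := by linarith
    have hp : 1 - c 0 ≤ 1 + N 0 0 := by linarith [neg_le_of_abs_le (hN 0 0)]
    have hp0 : 0 < 1 + N 0 0 := by linarith
    set N' : Matrix (Fin n) (Fin n) ℝ := Matrix.of fun i j =>
      N i.succ j.succ - N i.succ 0 * N 0 j.succ / (1 + N 0 0) with hN'
    have h1 : ∀ i j, |N' i j| ≤ c i.succ / (1 - c 0) := by
      intro i j
      have e : c i.succ / (1 - c 0) = c i.succ + c i.succ * c 0 / (1 - c 0) := by
        field_simp; ring
      rw [e]
      refine (abs_sub _ _).trans (add_le_add (hN _ _) ?_)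
      rw [abs_div, abs_mul, abs_of_pos hp0]
      gcongr
      · exact mul_nonneg (hc0 _) (hc0 _)
      · exact hc0 _
      · exact hN _ _
      · exact hN _ _
    have h2 := ih N' (fun i => c i.succ / (1 - c 0)) h1
      (by rw [← Finset.sum_div, div_lt_one hd]; linarith)
    have h3 : (1 + N).det = (1 + N 0 0) * (1 + N').det := by
      set A := 1 + N with hA
      have hA0 : A 0 0 = 1 + N 0 0 := by simp [hA]
      let k : Fin (n+1) → ℝ := fun i => if i = 0 then 0 else A i 0 / A 0 0
      let B : Matrix (Fin (n+1)) (Fin (n+1)) ℝ := Matrix.of fun i j => A i j - k i * A 0 j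
      have hB0 : ∀ j, B 0 j = A 0 j := fun j => by simp [B, k]
      have hdet : A.det = B.det := by
        refine Matrix.det_eq_of_forall_row_eq_smul_add_const k 0 (by simp [k]) ?_
        intro i j
        rw [hB0]; simp [B]
      rw [hdet, Matrix.det_succ_column_zero, Fin.sum_univ_succ]
      have hz : ∀ i : Fin n, B i.succ 0 = 0 := by
        intro i
        have : A 0 0 ≠ 0 := by rw [hA0]; exact hp0.ne'
        simp [B, k, Fin.succ_ne_zero]; field_simp; ring
      simp only [hz, hB0, hA0]
      have : B.submatrix (Fin.succAbove 0) Fin.succ = 1 + N' := by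
        ext i j
        have e1 : A i.succ 0 = N i.succ 0 := by simp [hA, Matrix.one_apply]
        have e2 : A 0 j.succ = N 0 j.succ := by
          simp [hA, Matrix.one_apply, (Fin.succ_ne_zero j).symm]
        have e3 : A i.succ j.succ = (1 : Matrix (Fin n) (Fin n) ℝ) i j + N i.succ j.succ := by
          simp [hA, Matrix.one_apply]
        simp only [Matrix.submatrix_apply, Matrix.of_apply, B, k, hN', Matrix.add_apply, Fin.succAbove_zero,
          if_neg (Fin.succ_ne_zero i), e1, e2, e3, hA0]
        ring
      rw [this]; simp
    rw [h3]
    have h4 : 1 - ∑ i : Fin n, c i.succ / (1 - c 0) = (1 - (c 0 + ∑ i : Fin n, c i.succ)) / (1 - c 0) := by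
      rw [← Finset.sum_div]; field_simp; ring
    rw [h4] at h2
    have h5 : 0 ≤ (1 - (c 0 + ∑ i : Fin n, c i.succ)) / (1 - c 0) := div_nonneg (by linarith) hd.le
    calc 1 - (c 0 + ∑ i : Fin n, c i.succ)
        = (1 - c 0) * ((1 - (c 0 + ∑ i : Fin n, c i.succ)) / (1 - c 0)) := by field_simp
      _ ≤ _ := mul_le_mul hp h2 h5 hp0.le

/-- The diagonal entries outside `S` are replaced by their worst value `-c`. Restoring the entry at
`k` changes the determinant by `N k k + c ≥ 0` times a minor, bounded by `one_sub_sum_le_det`. -/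
lemma det_diag_step {m : ℕ} (N : Matrix (Fin m) (Fin m) ℝ) (c : ℝ) (hN : ∀ i j, |N i j| ≤ c)
    (hc0 : 0 ≤ c) (hc : m * c < 1) (S : Finset (Fin m)) :
    1 - m * c + (1 - (m - 1) * c) * ∑ i ∈ S, (N i i + c) ≤
      (1 + Matrix.of fun i j => if i = j ∧ i ∉ S then -c else N i j : Matrix (Fin m) (Fin m) ℝ).det := by
  induction S using Finset.induction_on with
  | empty =>
    have := one_sub_sum_le_det m (Matrix.of fun i j => if i = j ∧ i ∉ (∅ : Finset (Fin m)) then -c else N i j)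
      (fun _ => c) (by
        intro i j
        rw [Matrix.of_apply]
        split_ifs
        · simp [abs_of_nonneg hc0]
        · exact hN i j) (by simpa using hc)
    simpa using this
  | insert k S hk ih =>
    rw [Finset.sum_insert hk]
    set A : Matrix (Fin m) (Fin m) ℝ := 1 + Matrix.of fun i j => if i = j ∧ i ∉ S then -c else N i j with hA
    have h1 : (1 + Matrix.of fun i j => if i = j ∧ i ∉ insert k S then -c else N i j : Matrix (Fin m) (Fin m) ℝ)
        = A.updateRow k (A k + (N k k + c) • Pi.single k 1) := by
      ext i j
      rcases eq_or_ne i k with rfl | hi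
      · rcases eq_or_ne j i with rfl | hj
        · simp [hA, hk]; ring
        · simp [hA, hj, hj.symm]
      · simp [hA, hi, Matrix.updateRow_ne]
    rw [h1, Matrix.det_updateRow_add, Matrix.det_updateRow_smul, Matrix.updateRow_eq_self]
    have h2 : 1 - (m - 1) * c ≤ (A.updateRow k (Pi.single k 1)).det := by
      have e : A.updateRow k (Pi.single k 1) = 1 +
          Matrix.of (fun i j => if i = k then 0 else if i = j ∧ i ∉ S then -c else N i j) := by
        ext i j
        rcases eq_or_ne i k with rfl | hi
        · rcases eq_or_ne j i with rfl | hj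
          · simp
          · simp [Matrix.one_apply, hj, hj.symm]
        · simp [hA, hi, Matrix.updateRow_ne]
      have hm : ∑ i : Fin m, (if i = k then 0 else c) = (m - 1) * c := by
        have : ∀ i : Fin m, (if i = k then 0 else c) = c - (if i = k then c else 0) := by
          intro i; split_ifs <;> simp
        simp [this, Finset.sum_sub_distrib]; ring
      have := one_sub_sum_le_det m
        (Matrix.of fun i j => if i = k then 0 else if i = j ∧ i ∉ S then -c else N i j)
        (fun i => if i = k then 0 else c) (by
          intro i j
          rw [Matrix.of_apply]
          split_ifs
          · simp
          · simp [abs_of_nonneg hc0]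
          · exact hN i j) (by rw [hm]; nlinarith)
      rw [e]; rwa [hm] at this
    have h3 : 0 ≤ N k k + c := by linarith [neg_le_of_abs_le (hN k k)]
    have := mul_le_mul_of_nonneg_left h2 h3
    linarith

/-- Only the negative parts of the diagonal entries enter with weight one; the off-diagonal entries
cost `(m - 1) * c` in total. -/
lemma one_sub_diag_le_det {m : ℕ} (N : Matrix (Fin m) (Fin m) ℝ) (c : ℝ) (hN : ∀ i j, |N i j| ≤ c)
    (hc0 : 0 ≤ c) (hm : 0 < m) (hc : m * c < 1) :
    1 - (m - 1) * c - ∑ i, max (-N i i) 0 ≤ (1 + N).det := by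
  have h := det_diag_step N c hN hc0 hc Finset.univ
  have e : (Matrix.of fun i j => if i = j ∧ i ∉ (Finset.univ : Finset (Fin m)) then -c else N i j) = N := by
    ext i j; simp
  rw [e] at h
  simp only [Finset.sum_add_distrib, Finset.sum_const, card_univ, Fintype.card_fin, nsmul_eq_mul] at h
  refine le_trans ?_ h
  have h1 : - ∑ i, max (-N i i) 0 ≤ ∑ i, N i i := by
    rw [← Finset.sum_neg_distrib]
    exact Finset.sum_le_sum fun i _ => by linarith [le_max_left (-N i i) 0]
  have h2 : 0 ≤ ∑ i, max (-N i i) 0 := Finset.sum_nonneg fun i _ => le_max_right _ _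
  have hm1 : (1:ℝ) ≤ m := by exact_mod_cast hm
  have h3 : 0 ≤ (m - 1) * c := mul_nonneg (by linarith) hc0
  have h4 : 0 ≤ 1 - (m - 1) * c := by nlinarith
  have h5 := mul_le_mul_of_nonneg_left h1 h4
  have h6 := mul_nonneg h3 h2
  have h7 := mul_nonneg h3 (by linarith : 0 ≤ 1 - m * c)
  nlinarith

/-! ### One-dimensional Gaussian estimates -/

lemma hasDerivAt_gaussPDF {v : NNReal} (hv : v ≠ 0) (t : ℝ) :
    HasDerivAt (gaussianPDFReal 0 v) (-(t / v) * gaussianPDFReal 0 v t) t := by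
  have hv' : (v : ℝ) ≠ 0 := by exact_mod_cast hv
  have h : HasDerivAt (fun x : ℝ => -(x - 0) ^ 2 / (2 * (v : ℝ))) (-(t / v)) t := by
    have := (((hasDerivAt_id t).sub_const (0:ℝ)).pow 2).neg.div_const (2 * (v:ℝ))
    refine this.congr_deriv ?_
    simp; field_simp
  have := h.exp.const_mul (Real.sqrt (2 * Real.pi * v))⁻¹
  refine this.congr_deriv ?_
  simp only [gaussianPDFReal]; ring

lemma setLIntegral_gaussian {v : NNReal} (hv : v ≠ 0) (g : ℝ → ℝ) (hg : Measurable g) {s : Set ℝ}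
    (hs : MeasurableSet s) :
    ∫⁻ t in s, ENNReal.ofReal (g t) ∂(gaussianReal 0 v) =
      ∫⁻ t in s, ENNReal.ofReal (g t * gaussianPDFReal 0 v t) := by
  rw [gaussianReal_of_var_ne_zero _ hv, setLIntegral_withDensity_eq_setLIntegral_mul _
    (measurable_gaussianPDF 0 v) (by fun_prop) hs]
  refine lintegral_congr fun t => ?_
  simp only [Pi.mul_apply, gaussianPDF]
  rw [mul_comm (g t), ENNReal.ofReal_mul (gaussianPDFReal_nonneg _ _ _)]

/-- One-sided Stein inequality on a symmetric interval. Replacing `w` by the primitive `V` of the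
positive part of `w'` increases `t * w t`, and the boundary terms of the integration by parts
then have the favourable sign. -/
lemma gaussian_stein_ineq {v : NNReal} (hv : v ≠ 0) (w w' : ℝ → ℝ)
    (hw : ∀ t, HasDerivAt w (w' t) t) (hw' : Continuous w') (h0 : w 0 = 0) (R : ℝ) :
    ∫⁻ t in Set.Ioo (-R) R, ENNReal.ofReal (t * w t) ∂(gaussianReal 0 v) ≤
      ∫⁻ t in Set.Ioo (-R) R, ENNReal.ofReal (v * w' t) ∂(gaussianReal 0 v) := by
  rcases le_or_gt R 0 with hR | hR
  · rw [Set.Ioo_eq_empty (by linarith)]; simp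
  have hv' : (0 : ℝ) < v := lt_of_le_of_ne v.2 (by exact_mod_cast hv.symm)
  have hwc : Continuous w := continuous_iff_continuousAt.2 fun t => (hw t).continuousAt
  set n : ℝ → ℝ := fun t => max (w' t) 0 with hn
  have hnc : Continuous n := hw'.max continuous_const
  set V : ℝ → ℝ := fun t => ∫ s in (0:ℝ)..t, n s with hV
  have hVd : ∀ t, HasDerivAt V (n t) t := fun t =>
    intervalIntegral.integral_hasDerivAt_right (hnc.intervalIntegrable _ _)
      (hnc.stronglyMeasurableAtFilter _ _) hnc.continuousAt
  have hVc : Continuous V := continuous_iff_continuousAt.2 fun t => (hVd t).continuousAt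
  have hwV : ∀ t, w t = ∫ s in (0:ℝ)..t, w' s := fun t => by
    rw [intervalIntegral.integral_eq_sub_of_hasDerivAt (fun s _ => hw s)
      (hw'.intervalIntegrable _ _), h0, sub_zero]
  have htw : ∀ t, t * w t ≤ t * V t := by
    intro t
    rcases le_total 0 t with ht | ht
    · refine mul_le_mul_of_nonneg_left ?_ ht
      rw [hwV]
      exact intervalIntegral.integral_mono_on ht (hw'.intervalIntegrable _ _)
        (hnc.intervalIntegrable _ _) fun s _ => le_max_left _ _
    · refine mul_le_mul_of_nonpos_left ?_ ht
      rw [hwV, hV]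
      simp only
      rw [intervalIntegral.integral_symm t 0, intervalIntegral.integral_symm t 0]
      exact neg_le_neg (intervalIntegral.integral_mono_on ht (hw'.intervalIntegrable _ _)
        (hnc.intervalIntegrable _ _) fun s _ => le_max_left _ _)
  have hV1 : ∀ t, 0 ≤ t → 0 ≤ V t := fun t ht =>
    intervalIntegral.integral_nonneg ht fun s _ => le_max_right _ _
  have hV2 : ∀ t, t ≤ 0 → V t ≤ 0 := fun t ht => by
    rw [hV]; simp only
    rw [intervalIntegral.integral_symm]
    exact neg_nonpos.2 (intervalIntegral.integral_nonneg ht fun s _ => le_max_right _ _)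
  have htV : ∀ t, 0 ≤ t * V t := fun t => by
    rcases le_total 0 t with ht | ht
    · exact mul_nonneg ht (hV1 t ht)
    · exact mul_nonneg_of_nonpos_of_nonpos ht (hV2 t ht)
  set p := gaussianPDFReal 0 v with hp
  have hpd := hasDerivAt_gaussPDF hv
  have hpc : Continuous p := continuous_iff_continuousAt.2 fun t => (hpd t).continuousAt
  have hp0 : ∀ t, 0 ≤ p t := gaussianPDFReal_nonneg 0 v
  -- the fundamental theorem of calculus for `V * p`, whose boundary terms have a sign
  have key : ∫ t in (-R)..R, t * V t * p t ≤ ∫ t in (-R)..R, v * n t * p t := by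
    have hd : ∀ t, HasDerivAt (fun t => v * (V t * p t)) (v * n t * p t - t * V t * p t) t := by
      intro t
      refine (((hVd t).mul (hpd t)).const_mul (v:ℝ)).congr_deriv ?_
      simp only [← hp]; field_simp; ring
    have := intervalIntegral.integral_eq_sub_of_hasDerivAt (a := -R) (b := R) (fun s _ => hd s)
      (Continuous.intervalIntegrable (by fun_prop) _ _)
    rw [intervalIntegral.integral_sub (Continuous.intervalIntegrable (by fun_prop) _ _)
      (Continuous.intervalIntegrable (by fun_prop) _ _)] at this
    have h1 : 0 ≤ v * (V R * p R) := mul_nonneg hv'.le (mul_nonneg (hV1 R hR.le) (hp0 _))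
    have h2 : v * (V (-R) * p (-R)) ≤ 0 := mul_nonpos_of_nonneg_of_nonpos hv'.le
      (mul_nonpos_of_nonpos_of_nonneg (hV2 _ (by linarith)) (hp0 _))
    linarith
  have toReal_int : ∀ g : ℝ → ℝ, Continuous g → (∀ t, 0 ≤ g t) →
      ∫⁻ t in Set.Ioo (-R) R, ENNReal.ofReal (g t) = ENNReal.ofReal (∫ t in (-R)..R, g t) := by
    intro g hg hg0
    rw [intervalIntegral.integral_of_le (by linarith), integral_Ioc_eq_integral_Ioo,
      ofReal_integral_eq_lintegral_ofReal]
    · exact ((hg.integrableOn_Icc (a := -R) (b := R)).mono_set Set.Ioo_subset_Icc_self)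
    · exact ae_of_all _ hg0
  rw [setLIntegral_gaussian hv _ (by fun_prop) measurableSet_Ioo,
    setLIntegral_gaussian hv _ (by fun_prop) measurableSet_Ioo]
  calc ∫⁻ t in Set.Ioo (-R) R, ENNReal.ofReal (t * w t * p t)
      ≤ ∫⁻ t in Set.Ioo (-R) R, ENNReal.ofReal (t * V t * p t) := by
        exact lintegral_mono fun t =>
          ENNReal.ofReal_le_ofReal (mul_le_mul_of_nonneg_right (htw t) (hp0 t))
    _ = ENNReal.ofReal (∫ t in (-R)..R, t * V t * p t) :=
        toReal_int _ (by fun_prop) fun t => mul_nonneg (htV t) (hp0 t)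
    _ ≤ ENNReal.ofReal (∫ t in (-R)..R, v * n t * p t) := ENNReal.ofReal_le_ofReal key
    _ = ∫⁻ t in Set.Ioo (-R) R, ENNReal.ofReal (v * n t * p t) :=
        (toReal_int _ (by fun_prop) fun t => mul_nonneg (mul_nonneg hv'.le (le_max_right _ _)) (hp0 t)).symm
    _ ≤ _ := by
        refine lintegral_mono fun t => ?_
        rcases le_total (w' t) 0 with h | h
        · simp [n, h]
        · simp [n, h, hp]

lemma gaussian_abs {σ : ℝ} (hσ : 0 < σ) :
    ∫⁻ x, ENNReal.ofReal |x| ∂(gaussianReal 0 σ.toNNReal) = ENNReal.ofReal (Real.sqrt (2 * σ / Real.pi)) := by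
  have hv : σ.toNNReal ≠ 0 := by simpa using hσ
  have hv' : (σ.toNNReal : ℝ) = σ := Real.coe_toNNReal _ hσ.le
  rw [← ofReal_integral_eq_lintegral_ofReal, integral_gaussianReal_eq_integral_smul hv]
  · congr 1
    have e : ∀ x, gaussianPDFReal 0 σ.toNNReal x • |x| =
        (fun y => (Real.sqrt (2 * Real.pi * σ))⁻¹ * (y ^ (1:ℝ) * Real.exp (-(1 / (2 * σ)) * y ^ (2:ℝ)))) |x| := by
      intro x
      simp only [gaussianPDFReal, hv', smul_eq_mul, sub_zero, Real.rpow_one, Real.rpow_two, sq_abs]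
      have : -x ^ 2 / (2 * σ) = -(1 / (2 * σ)) * x ^ 2 := by ring
      rw [this]; ring
    rw [(integral_congr_ae (ae_of_all _ e)).trans (integral_comp_abs (f := fun y => (Real.sqrt (2 * Real.pi * σ))⁻¹ * (y ^ (1:ℝ) * Real.exp (-(1 / (2 * σ)) * y ^ (2:ℝ))))), integral_const_mul, integral_rpow_mul_exp_neg_mul_rpow (by norm_num) (by norm_num) (by positivity)]
    norm_num
    rw [Real.rpow_neg_one]
    rw [Real.sqrt_mul (by positivity), Real.sqrt_mul (by norm_num), Real.sqrt_div (by positivity), Real.sqrt_mul (by norm_num)]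
    have h1 := Real.sq_sqrt hσ.le
    have h2 : Real.sqrt 2 ^ 2 = 2 := Real.sq_sqrt (by norm_num)
    have h3 : 0 < Real.sqrt σ := Real.sqrt_pos.2 hσ
    have h4 : 0 < Real.sqrt Real.pi := Real.sqrt_pos.2 Real.pi_pos
    field_simp
    rw [h1, h2]
  · have := (memLp_id_gaussianReal (μ := 0) (v := σ.toNNReal) 1)
    exact (memLp_one_iff_integrable.1 (by simpa using this) : Integrable id _).abs
  · exact ae_of_all _ fun x => abs_nonneg x

lemma gaussian_sq {σ : ℝ} (hσ : 0 < σ) :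
    ∫⁻ x, ENNReal.ofReal (x ^ 2) ∂(gaussianReal 0 σ.toNNReal) = ENNReal.ofReal σ := by
  have h2 := (memLp_id_gaussianReal (μ := 0) (v := σ.toNNReal) 2)
  rw [← ofReal_integral_eq_lintegral_ofReal]
  · have h := variance_fun_id_gaussianReal (μ := 0) (v := σ.toNNReal)
    rw [variance_eq_integral (by fun_prop)] at h
    simp only [integral_id_gaussianReal, sub_zero] at h
    rw [h, Real.coe_toNNReal _ hσ.le]
  · exact h2.integrable_sq
  · exact ae_of_all _ fun x => sq_nonneg x

/-- Stein's inequality for `t ^ 3`. -/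
lemma gaussian_four {σ : ℝ} (hσ : 0 < σ) (R : ℝ) :
    ∫⁻ x in Set.Ioo (-R) R, ENNReal.ofReal (x ^ 4) ∂(gaussianReal 0 σ.toNNReal)
      ≤ ENNReal.ofReal (3 * σ ^ 2) := by
  have hv : σ.toNNReal ≠ 0 := by simpa using hσ
  have hv' : (σ.toNNReal : ℝ) = σ := Real.coe_toNNReal _ hσ.le
  have h := gaussian_stein_ineq hv (fun t => t ^ 3) (fun t => 3 * t ^ 2)
    (fun t => by simpa using hasDerivAt_pow 3 t) (by fun_prop) (by simp) R
  calc _ = ∫⁻ x in Set.Ioo (-R) R, ENNReal.ofReal (x * x ^ 3) ∂(gaussianReal 0 σ.toNNReal) := by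
        refine lintegral_congr fun x => ?_
        congr 1; ring
    _ ≤ _ := h
    _ ≤ ∫⁻ x, ENNReal.ofReal (σ.toNNReal * (3 * x ^ 2)) ∂(gaussianReal 0 σ.toNNReal) :=
        setLIntegral_le_lintegral _ _
    _ = ∫⁻ x, ENNReal.ofReal (3 * σ) * ENNReal.ofReal (x ^ 2) ∂(gaussianReal 0 σ.toNNReal) := by
        refine lintegral_congr fun x => ?_
        rw [← ENNReal.ofReal_mul (by positivity), hv']; congr 1; ring
    _ = _ := by
        rw [lintegral_const_mul _ (by fun_prop), gaussian_sq hσ, ← ENNReal.ofReal_mul (by positivity)]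
        congr 1; ring

/-- Follows from `exp (l|x|) ≤ exp (l x) + exp (-l x) - 1 + l|x|` and the Gaussian moment generating
function. -/
lemma gaussian_exp_abs {σ : ℝ} (hσ : 0 < σ) {l : ℝ} (hl : 0 ≤ l) :
    ∫⁻ x, ENNReal.ofReal (Real.exp (l * |x|)) ∂(gaussianReal 0 σ.toNNReal) ≤
      ENNReal.ofReal (Real.exp (l * Real.sqrt (2 * σ / Real.pi) + l ^ 2 * σ)) := by
  set μ := gaussianReal 0 σ.toNNReal with hμ
  have hv' : (σ.toNNReal : ℝ) = σ := Real.coe_toNNReal _ hσ.le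
  have i1 : ∀ t : ℝ, Integrable (fun x => Real.exp (t * x)) μ := fun t =>
    integrable_exp_mul_gaussianReal t
  have m1 : ∀ t : ℝ, ∫ x, Real.exp (t * x) ∂μ = Real.exp (t ^ 2 * σ / 2) := by
    intro t
    have := congrFun (mgf_fun_id_gaussianReal (μ := 0) (v := σ.toNNReal)) t
    simp only [mgf, hv'] at this
    rw [this]; congr 1; ring
  have iabs : Integrable (fun x : ℝ => |x|) μ := by
    have := (memLp_id_gaussianReal (μ := 0) (v := σ.toNNReal) 1)
    exact (memLp_one_iff_integrable.1 (by simpa using this) : Integrable id _).abs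
  have mabs : ∫ x, |x| ∂μ = Real.sqrt (2 * σ / Real.pi) := by
    have := gaussian_abs hσ
    rw [← ofReal_integral_eq_lintegral_ofReal iabs (ae_of_all _ fun x => abs_nonneg x)] at this
    exact (ENNReal.ofReal_eq_ofReal_iff (integral_nonneg fun x => abs_nonneg x) (Real.sqrt_nonneg _)).1 this
  have ig : Integrable (fun x => Real.exp (l * x) + Real.exp (-l * x) - 1 + l * |x|) μ :=
    (((i1 l).add (i1 (-l))).sub (integrable_const 1)).add (iabs.const_mul l)
  have pt : ∀ x : ℝ, Real.exp (l * |x|) ≤ Real.exp (l * x) + Real.exp (-l * x) - 1 + l * |x| := by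
    intro x
    have h1 : Real.exp (l * x) + Real.exp (-l * x) = Real.exp (l * |x|) + Real.exp (-(l * |x|)) := by
      rcases abs_cases x with ⟨h, _⟩ | ⟨h, _⟩ <;> rw [h]
      · simp
      · simp [add_comm]
    have h2 := Real.add_one_le_exp (-(l * |x|))
    linarith
  calc _ ≤ ∫⁻ x, ENNReal.ofReal (Real.exp (l * x) + Real.exp (-l * x) - 1 + l * |x|) ∂μ :=
        lintegral_mono fun x => ENNReal.ofReal_le_ofReal (pt x)
    _ = ENNReal.ofReal (∫ x, (Real.exp (l * x) + Real.exp (-l * x) - 1 + l * |x|) ∂μ) :=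
        (ofReal_integral_eq_lintegral_ofReal ig
          (ae_of_all _ fun x => (Real.exp_pos _).le.trans (pt x))).symm
    _ ≤ _ := by
      refine ENNReal.ofReal_le_ofReal ?_
      have i2 : Integrable (fun x => Real.exp (l * x) + Real.exp (-l * x)) μ :=
        (i1 l).add (i1 (-l))
      have i3 : Integrable (fun x => Real.exp (l * x) + Real.exp (-l * x) - 1) μ :=
        i2.sub (integrable_const 1)
      rw [integral_add i3 (iabs.const_mul l),
        integral_sub i2 (integrable_const 1), integral_add (i1 l) (i1 (-l)),
        m1, m1, integral_const_mul, mabs]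
      simp only [neg_sq, integral_const, probReal_univ, smul_eq_mul, mul_one]
      set s := Real.sqrt (2 * σ / Real.pi)
      have hs : 0 ≤ l * s := mul_nonneg hl (Real.sqrt_nonneg _)
      have e2 : Real.exp (l ^ 2 * σ) = Real.exp (l ^ 2 * σ / 2) ^ 2 := by
        rw [← Real.exp_nat_mul]; congr 1; push_cast; ring
      have h1 : 1 ≤ Real.exp (l ^ 2 * σ) := Real.one_le_exp (by positivity)
      have h2 := Real.add_one_le_exp (l * s)
      rw [Real.exp_add]
      have h3 := sq_nonneg (Real.exp (l ^ 2 * σ / 2) - 1)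
      have h4 := mul_le_mul_of_nonneg_right h2 (Real.exp_pos (l ^ 2 * σ)).le
      nlinarith

/-! ### Estimates for the isotropic Gaussian measure -/

lemma lintegral_pi_prod {m : ℕ} (μ : Fin m → Measure ℝ) [∀ i, SigmaFinite (μ i)]
    (g : Fin m → ℝ → ℝ) (hg : ∀ i, Integrable (g i) (μ i)) (h0 : ∀ i x, 0 ≤ g i x) :
    ∫⁻ x, ENNReal.ofReal (∏ i, g i (x i)) ∂(Measure.pi μ) =
      ∏ i, ∫⁻ x, ENNReal.ofReal (g i x) ∂(μ i) := by
  rw [← ofReal_integral_eq_lintegral_ofReal (Integrable.fintype_prod hg)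
    (ae_of_all _ fun x => prod_nonneg fun i _ => h0 i _), integral_fintype_prod_eq_prod,
    ENNReal.ofReal_prod_of_nonneg fun i _ => integral_nonneg (h0 i)]
  exact prod_congr rfl fun i _ =>
    ofReal_integral_eq_lintegral_ofReal (hg i) (ae_of_all _ (h0 i))

lemma gaussPi_eq_withDensity {m : ℕ} {σ : ℝ} (hσ : 0 < σ) :
    gaussPi m 0 σ = volume.withDensity
      (fun x => ENNReal.ofReal (∏ i, gaussianPDFReal 0 σ.toNNReal (x i))) := by
  have hv : σ.toNNReal ≠ 0 := by simpa using hσ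
  refine Measure.pi_eq fun s hs => ?_
  rw [withDensity_apply _ (MeasurableSet.univ_pi hs), volume_pi, Measure.restrict_pi_pi,
    lintegral_pi_prod _ (fun _ => gaussianPDFReal 0 σ.toNNReal)
      (fun i => (integrable_gaussianPDFReal 0 _).restrict)
      (fun i => gaussianPDFReal_nonneg 0 _)]
  refine prod_congr rfl fun i _ => ?_
  simp only [Pi.zero_apply, gaussianReal_apply 0 hv, gaussianPDF]

section
variable {m : ℕ} {σ : ℝ}

instance instProbGaussPi : IsProbabilityMeasure (gaussPi m 0 σ) := by
  unfold gaussPi; infer_instance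

lemma gaussPi_lintegral_eval (i : Fin m) (F : ℝ → ENNReal) (hF : Measurable F) :
    ∫⁻ x, F (x i) ∂(gaussPi m 0 σ) = ∫⁻ t, F t ∂(gaussianReal 0 σ.toNNReal) :=
  (measurePreserving_eval (fun _ : Fin m => gaussianReal 0 σ.toNNReal) i).lintegral_comp hF

lemma gaussPi_norm (hσ : 0 < σ) :
    ∫⁻ x, ENNReal.ofReal (∑ k, |x k|) ∂(gaussPi m 0 σ) =
      ENNReal.ofReal (m * Real.sqrt (2 * σ / Real.pi)) := by
  simp_rw [ENNReal.ofReal_sum_of_nonneg (fun i _ => abs_nonneg _)]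
  rw [lintegral_finsetSum _ (fun i _ => by fun_prop)]
  rw [sum_congr rfl fun i _ => (gaussPi_lintegral_eval i (fun t => ENNReal.ofReal |t|)
    (by fun_prop)).trans (gaussian_abs hσ)]
  rw [sum_const, card_univ, Fintype.card_fin, ENNReal.ofReal_mul (by positivity)]
  simp

lemma gaussPi_four (hσ : 0 < σ) (r : ℝ) (i : Fin m) :
    ∫⁻ x in {x | ∑ k, |x k| < r}, ENNReal.ofReal (x i ^ 4) ∂(gaussPi m 0 σ) ≤
      ENNReal.ofReal (3 * σ ^ 2) := by
  refine le_trans ?_ (gaussian_four hσ r)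
  rw [← lintegral_indicator measurableSet_Ioo,
    ← gaussPi_lintegral_eval i _ (Measurable.indicator (by fun_prop) measurableSet_Ioo)]
  refine (lintegral_mono_set (t := {x | x i ∈ Set.Ioo (-r) r}) ?_).trans ?_
  · intro x hx
    have : |x i| ≤ ∑ k, |x k| := single_le_sum (f := fun k => |x k|) (fun k _ => abs_nonneg _) (mem_univ i)
    exact abs_lt.1 (this.trans_lt hx)
  · have hms : MeasurableSet {x : Fin m → ℝ | x i ∈ Set.Ioo (-r) r} :=
      measurableSet_Ioo.preimage (measurable_pi_apply i)
    rw [← lintegral_indicator hms]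
    refine lintegral_mono fun x => ?_
    by_cases h : x i ∈ Set.Ioo (-r) r
    · rw [Set.indicator_of_mem h, Set.indicator_of_mem (show x ∈ {x : Fin m → ℝ | x i ∈ Set.Ioo (-r) r} from h)]
    · rw [Set.indicator_of_notMem (show x ∉ {x : Fin m → ℝ | x i ∈ Set.Ioo (-r) r} from h)]
      exact zero_le

lemma sum_abs_update (x : Fin m → ℝ) (i : Fin m) (t : ℝ) :
    ∑ k, |Function.update x i t k| = |t| + ∑ k ∈ univ.erase i, |x k| := by
  rw [← add_sum_erase _ _ (mem_univ i)]
  simp only [Function.update_self]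
  congr 1
  exact sum_congr rfl fun k hk => by rw [Function.update_of_ne (ne_of_mem_erase hk)]

/-- Independence of the `i`-th coordinate from the others, then Cauchy-Schwarz for the square. -/
lemma gaussPi_mix (hσ : 0 < σ) (i : Fin m) :
    ∫⁻ x, ENNReal.ofReal (|x i| * (∑ k ∈ univ.erase i, |x k|) ^ 2) ∂(gaussPi m 0 σ) ≤
      ENNReal.ofReal (Real.sqrt (2 * σ / Real.pi) * ((m - 1) ^ 2 * σ)) := by
  have hm : 1 ≤ m := Fin.pos i
  have hup : ∀ (x : Fin m → ℝ) t, ∑ k ∈ univ.erase i, |Function.update x i t k| =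
      ∑ k ∈ univ.erase i, |x k| := fun x t =>
    sum_congr rfl fun k hk => by rw [Function.update_of_ne (ne_of_mem_erase hk)]
  have h1 : ∫⁻ x, ENNReal.ofReal (|x i| * (∑ k ∈ univ.erase i, |x k|) ^ 2) ∂(gaussPi m 0 σ) =
      ∫⁻ x, ENNReal.ofReal (Real.sqrt (2 * σ / Real.pi)) *
        ENNReal.ofReal ((∑ k ∈ univ.erase i, |x k|) ^ 2) ∂(gaussPi m 0 σ) := by
    refine lintegral_eq_of_lmarginal_eq {i} (by fun_prop) (by fun_prop) ?_
    rw [lmarginal_singleton, lmarginal_singleton]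
    ext x
    simp only [hup, Function.update_self, Pi.zero_apply, lintegral_const, measure_univ, mul_one]
    simp_rw [ENNReal.ofReal_mul (abs_nonneg _)]
    rw [lintegral_mul_const _ (by fun_prop), gaussian_abs hσ]
  have h2 : ∀ x : Fin m → ℝ, (∑ k ∈ univ.erase i, |x k|) ^ 2 ≤
      (m - 1) * ∑ k ∈ univ.erase i, x k ^ 2 := by
    intro x
    have := sq_sum_le_card_mul_sum_sq (s := univ.erase i) (f := fun k => |x k|)
    simpa [card_erase_of_mem, Nat.cast_sub hm] using this
  have hm' : (0:ℝ) ≤ m - 1 := by have : (1:ℝ) ≤ m := by exact_mod_cast hm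
                                 linarith
  rw [h1, lintegral_const_mul _ (by fun_prop), ENNReal.ofReal_mul (Real.sqrt_nonneg _)]
  gcongr
  calc _ ≤ ∫⁻ x, ENNReal.ofReal (m - 1) * ∑ k ∈ univ.erase i, ENNReal.ofReal (x k ^ 2) ∂(gaussPi m 0 σ) := by
        refine lintegral_mono fun x => ?_
        rw [← ENNReal.ofReal_sum_of_nonneg (fun k _ => sq_nonneg _), ← ENNReal.ofReal_mul hm']
        exact ENNReal.ofReal_le_ofReal (h2 x)
    _ = _ := by
        rw [lintegral_const_mul _ (by fun_prop), lintegral_finsetSum _ (fun i _ => by fun_prop),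
          sum_congr rfl fun k _ => (gaussPi_lintegral_eval k (fun t => ENNReal.ofReal (t ^ 2))
            (by fun_prop)).trans (gaussian_sq hσ), sum_const, card_erase_of_mem (mem_univ _),
          card_univ, Fintype.card_fin, sq, mul_assoc, ENNReal.ofReal_mul hm', ENNReal.ofReal_mul hm']
        congr 1
        rw [nsmul_eq_mul]
        congr 1
        rw [← ENNReal.ofReal_natCast, Nat.cast_sub hm, Nat.cast_one]

/-- `gaussian_stein_ineq` applied on each line parallel to the `i`-th axis, which meets the
`ℓ¹` ball in a symmetric interval. -/
lemma gaussPi_stein (hσ : 0 < σ) (r : ℝ) (i : Fin m) (u : (Fin m → ℝ) → ℝ) (hu : ContDiff ℝ 1 u) :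
    ∫⁻ x in {x | ∑ k, |x k| < r}, ENNReal.ofReal (x i * (u x - u (Function.update x i 0)))
        ∂(gaussPi m 0 σ) ≤
      ∫⁻ x in {x | ∑ k, |x k| < r}, ENNReal.ofReal (σ * fderiv ℝ u x (Pi.single i 1))
        ∂(gaussPi m 0 σ) := by
  have hv : σ.toNNReal ≠ 0 := by simpa using hσ
  have hv' : (σ.toNNReal : ℝ) = σ := Real.coe_toNNReal _ hσ.le
  have hB : MeasurableSet {x : Fin m → ℝ | ∑ k, |x k| < r} :=
    measurableSet_lt (by fun_prop) measurable_const
  have huc := hu.continuous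
  have hdc : Continuous fun x => fderiv ℝ u x (Pi.single i 1) :=
    (hu.continuous_fderiv (by simp)).clm_apply continuous_const
  have hupm : Measurable fun x : Fin m → ℝ => u (Function.update x i 0) :=
    huc.measurable.comp (by fun_prop)
  rw [← lintegral_indicator hB, ← lintegral_indicator hB]
  refine lintegral_le_of_lmarginal_le {i} ?_ ?_ ?_
  · exact Measurable.indicator (by fun_prop) hB
  · exact Measurable.indicator (by fun_prop) hB
  rw [lmarginal_singleton, lmarginal_singleton]
  intro x
  simp only [Pi.zero_apply]
  set R := r - ∑ k ∈ univ.erase i, |x k| with hR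
  have hmem : ∀ t, Function.update x i t ∈ {x : Fin m → ℝ | ∑ k, |x k| < r} ↔ t ∈ Set.Ioo (-R) R := by
    intro t
    rw [Set.mem_setOf_eq, sum_abs_update, Set.mem_Ioo, ← abs_lt, hR, lt_sub_iff_add_lt]
  have hind : ∀ F : (Fin m → ℝ) → ENNReal,
      ∫⁻ t, Set.indicator {x : Fin m → ℝ | ∑ k, |x k| < r} F (Function.update x i t)
        ∂(gaussianReal 0 σ.toNNReal) =
      ∫⁻ t in Set.Ioo (-R) R, F (Function.update x i t) ∂(gaussianReal 0 σ.toNNReal) := by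
    intro F
    rw [← lintegral_indicator measurableSet_Ioo]
    refine lintegral_congr fun t => ?_
    by_cases h : t ∈ Set.Ioo (-R) R
    · rw [Set.indicator_of_mem h, Set.indicator_of_mem ((hmem t).2 h)]
    · rw [Set.indicator_of_notMem h, Set.indicator_of_notMem (fun h' => h ((hmem t).1 h'))]
  rw [hind, hind]
  have h := gaussian_stein_ineq hv (fun t => u (Function.update x i t) - u (Function.update x i 0))
    (fun t => fderiv ℝ u (Function.update x i t) (Pi.single i 1))
    (fun t => by
      have h1 := (hu.differentiable (by simp) (Function.update x i t)).hasFDerivAt.comp_hasDerivAt t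
        (hasDerivAt_update x i t)
      exact h1.sub_const _)
    (hdc.comp (continuous_const.update i continuous_id)) (by simp) R
  simpa [hv'] using h

/-- Chernoff bound with the optimal parameter `l = (r - m s) / (2 m σ)`, where `s = √(2σ/π)` is the
mean of `|X_i|`. -/
lemma gaussPi_tail (hm : 0 < m) (hσ : 0 < σ) {r : ℝ} (hr : m * Real.sqrt (2 * σ / Real.pi) < r) :
    gaussPi m 0 σ {x | ∑ k, |x k| < r}ᶜ ≤ ENNReal.ofReal
      (Real.exp (-(r / (2 * Real.sqrt σ) - m / Real.sqrt (2 * Real.pi)) ^ 2 / m)) := by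
  set s := Real.sqrt (2 * σ / Real.pi) with hs
  have hm' : (0:ℝ) < m := by exact_mod_cast hm
  set l := (r - m * s) / (2 * m * σ) with hl
  have hl0 : 0 ≤ l := by rw [hl]; apply div_nonneg; linarith; positivity
  have hB : MeasurableSet {x : Fin m → ℝ | ∑ k, |x k| < r} :=
    measurableSet_lt (by fun_prop) measurable_const
  have hv : σ.toNNReal ≠ 0 := by simpa using hσ
  have hexpInt : Integrable (fun t => Real.exp (l * |t|)) (gaussianReal 0 σ.toNNReal) := by
    refine ⟨by fun_prop, ?_⟩
    rw [hasFiniteIntegral_iff_ofReal (ae_of_all _ fun x => (Real.exp_pos _).le)]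
    exact (gaussian_exp_abs hσ hl0).trans_lt ENNReal.ofReal_lt_top
  have key : ∫⁻ x, ENNReal.ofReal (∏ i, Real.exp (l * |x i|)) ∂(gaussPi m 0 σ) ≤
      ENNReal.ofReal (Real.exp (l * s + l ^ 2 * σ)) ^ m := by
    simp only [gaussPi, Pi.zero_apply]
    rw [lintegral_pi_prod _ (fun _ t => Real.exp (l * |t|)) (fun i => hexpInt)
      (fun i x => (Real.exp_pos _).le)]
    refine (prod_le_prod' fun i _ => gaussian_exp_abs hσ hl0).trans ?_
    simp [hs]
  calc gaussPi m 0 σ {x | ∑ k, |x k| < r}ᶜ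
      = ∫⁻ x in {x | ∑ k, |x k| < r}ᶜ, 1 ∂(gaussPi m 0 σ) := by simp
    _ ≤ ∫⁻ x in {x | ∑ k, |x k| < r}ᶜ, ENNReal.ofReal (Real.exp (-l * r)) *
          ENNReal.ofReal (∏ i, Real.exp (l * |x i|)) ∂(gaussPi m 0 σ) := by
        refine setLIntegral_mono' hB.compl fun x hx => ?_
        rw [← ENNReal.ofReal_mul (Real.exp_pos _).le, ← Real.exp_sum, ← Real.exp_add]
        rw [ENNReal.one_le_ofReal]
        apply Real.one_le_exp
        have hx' : r ≤ ∑ k, |x k| := by simpa using hx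
        rw [← mul_sum]
        nlinarith
    _ ≤ ENNReal.ofReal (Real.exp (-l * r)) * ENNReal.ofReal (Real.exp (l * s + l ^ 2 * σ)) ^ m := by
        refine (setLIntegral_le_lintegral _ _).trans ?_
        rw [lintegral_const_mul _ (by fun_prop)]
        gcongr
    _ = _ := by
        rw [← ENNReal.ofReal_pow (Real.exp_pos _).le, ← ENNReal.ofReal_mul (Real.exp_pos _).le,
          ← Real.exp_nat_mul, ← Real.exp_add]
        congr 2
        have h1 := Real.sq_sqrt hσ.le
        have h2 : Real.sqrt 2 ^ 2 = 2 := Real.sq_sqrt (by norm_num)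
        have h3 : 0 < Real.sqrt σ := Real.sqrt_pos.2 hσ
        have h4 : 0 < Real.sqrt Real.pi := Real.sqrt_pos.2 Real.pi_pos
        have hss : m / Real.sqrt (2 * Real.pi) = m * s / (2 * Real.sqrt σ) := by
          rw [hs, Real.sqrt_div (by positivity), Real.sqrt_mul (by norm_num), Real.sqrt_mul (by norm_num)]
          field_simp; rw [h2]
        rw [hss, ← sub_div, div_pow _ (2 * Real.sqrt σ), mul_pow 2 (Real.sqrt σ), h1, hl]
        field_simp
        ring
end

/-! ### Taylor estimates and the reduction to a perturbation of the identity -/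

section
variable {m : ℕ}

lemma clm_apply_eq_sum (L : (Fin m → ℝ) →L[ℝ] ℝ) (x : Fin m → ℝ) :
    L x = ∑ j, x j * L (Pi.single j 1) := by
  conv_lhs => rw [pi_eq_sum_univ' x, map_sum]
  refine sum_congr rfl fun i _ => ?_
  rw [map_smul, smul_eq_mul]

lemma abs_clm_apply_le (L : (Fin m → ℝ) →L[ℝ] ℝ) {C : ℝ} (hL : ∀ j, |L (Pi.single j 1)| ≤ C)
    (x : Fin m → ℝ) : |L x| ≤ C * ∑ j, |x j| := by
  rw [clm_apply_eq_sum, mul_sum]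
  refine (abs_sum_le_sum_abs _ _).trans (sum_le_sum fun j _ => ?_)
  rw [abs_mul, mul_comm]
  exact mul_le_mul_of_nonneg_right (hL j) (abs_nonneg _)

/-- Mean value inequality along the segment from `x` to `y`, in terms of the `ℓ¹` norm. -/
lemma seg_bound {g : (Fin m → ℝ) → ℝ} (hg : Differentiable ℝ g) {C : ℝ} {x y : Fin m → ℝ}
    (h : ∀ t ∈ Set.Icc (0:ℝ) 1, ∀ j, |fderiv ℝ g (x + t • (y - x)) (Pi.single j 1)| ≤ C) :
    |g y - g x| ≤ C * ∑ j, |y j - x j| := by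
  have hd : ∀ t : ℝ, HasDerivAt (fun t : ℝ => g (x + t • (y - x)))
      (fderiv ℝ g (x + t • (y - x)) (y - x)) t := by
    intro t
    have h1 : HasDerivAt (fun t : ℝ => x + t • (y - x)) (y - x) t := by
      simpa using ((hasDerivAt_id t).smul_const (y - x)).const_add x
    exact (hg _).hasFDerivAt.comp_hasDerivAt t h1
  have := norm_image_sub_le_of_norm_deriv_le_segment_01' (f := fun t : ℝ => g (x + t • (y - x)))
    (C := C * ∑ j, |y j - x j|) (fun t _ => (hd t).hasDerivWithinAt)
    (fun t ht => by
      rw [Real.norm_eq_abs]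
      exact abs_clm_apply_le _ (h t ⟨ht.1, ht.2.le⟩) (y - x))
  simpa using this

lemma sum_abs_smul (t : ℝ) (x : Fin m → ℝ) : ∑ k, |(t • x) k| = |t| * ∑ k, |x k| := by
  simp [abs_mul, mul_sum]

lemma taylor_bound {g : (Fin m → ℝ) → ℝ} (hg : Differentiable ℝ g) {K r : ℝ}
    (h0 : g 0 = 0)
    (h : ∀ x : Fin m → ℝ, ∑ k, |x k| < r → ∀ j, |fderiv ℝ g x (Pi.single j 1)| ≤ K * ∑ k, |x k|)
    {x : Fin m → ℝ} (hx : ∑ k, |x k| < r) :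
    |g x| ≤ K * (∑ k, |x k|) ^ 2 / 2 := by
  set N := ∑ k, |x k| with hN
  have hN0 : 0 ≤ N := sum_nonneg fun k _ => abs_nonneg _
  have hd : ∀ t : ℝ, HasDerivAt (fun t : ℝ => g (t • x)) (fderiv ℝ g (t • x) x) t := by
    intro t
    have h1 : HasDerivAt (fun t : ℝ => t • x) x t := by
      simpa using (hasDerivAt_id t).smul_const x
    exact (hg _).hasFDerivAt.comp_hasDerivAt t h1
  have hB : ∀ t : ℝ, HasDerivAt (fun t : ℝ => K * N ^ 2 * t ^ 2 / 2) (K * N ^ 2 * t) t := by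
    intro t
    refine (((hasDerivAt_pow 2 t).const_mul (K * N ^ 2)).div_const 2).congr_deriv ?_
    simp; ring
  have := image_norm_le_of_norm_deriv_right_le_deriv_boundary (a := 0) (b := 1)
    (f := fun t : ℝ => g (t • x)) (f' := fun t => fderiv ℝ g (t • x) x)
    (B := fun t => K * N ^ 2 * t ^ 2 / 2) (B' := fun t => K * N ^ 2 * t)
    (fun t _ => (hd t).continuousAt.continuousWithinAt)
    (fun t _ => (hd t).hasDerivWithinAt) (by simp [h0]) hB
    (fun t ht => by
      have e : ∑ k, |(t • x) k| = t * N := by rw [sum_abs_smul, abs_of_nonneg ht.1]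
      have h1 : ∑ k, |(t • x) k| < r := by
        rw [e]; nlinarith [ht.2, ht.1]
      have := abs_clm_apply_le _ (h _ h1) x
      rw [e] at this
      rw [Real.norm_eq_abs]
      refine this.trans (le_of_eq ?_)
      rw [← hN]; ring) (x := 1) (by simp)
  simpa using this

lemma injOn_of_bound {u : (Fin m → ℝ) → Fin m → ℝ} (hu : Differentiable ℝ u) {κ r : ℝ}
    (hκ : 0 < κ) (hm : 0 < m) (hr : m * κ * r ≤ 1)
    (h : ∀ x : Fin m → ℝ, ∑ k, |x k| < r → ∀ i j,
      |fderiv ℝ (fun y => u y i) x (Pi.single j 1)| ≤ κ * ∑ k, |x k|) :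
    Set.InjOn (fun x => x + u x) {x | ∑ k, |x k| < r} := by
  intro x hx y hy hxy
  simp only [Set.mem_setOf_eq] at hx hy
  have hm' : (0:ℝ) < m := by exact_mod_cast hm
  set R := max (∑ k, |x k|) (∑ k, |y k|) with hR
  have hRr : R < r := max_lt hx hy
  have hseg : ∀ t ∈ Set.Icc (0:ℝ) 1, ∑ k, |(x + t • (y - x)) k| ≤ R := by
    intro t ht
    have h1 : ∀ k, |(x + t • (y - x)) k| ≤ (1 - t) * |x k| + t * |y k| := by
      intro k
      have : (x + t • (y - x)) k = (1 - t) * x k + t * y k := by simp; ring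
      rw [this]
      refine (abs_add_le _ _).trans ?_
      rw [abs_mul, abs_mul, abs_of_nonneg (by linarith [ht.2] : 0 ≤ 1 - t), abs_of_nonneg ht.1]
    refine (sum_le_sum fun k _ => h1 k).trans ?_
    rw [sum_add_distrib, ← mul_sum, ← mul_sum]
    have h2 := mul_le_mul_of_nonneg_left (le_max_left (∑ k, |x k|) (∑ k, |y k|)) (by linarith [ht.2] : 0 ≤ 1 - t)
    have h3 := mul_le_mul_of_nonneg_left (le_max_right (∑ k, |x k|) (∑ k, |y k|)) ht.1
    rw [← hR] at h2 h3
    linarith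
  have hi : ∀ i, |u y i - u x i| ≤ κ * R * ∑ j, |y j - x j| := fun i =>
    seg_bound (g := fun z => u z i) (fun z => by fun_prop)
      fun t ht j => (h _ ((hseg t ht).trans_lt hRr) i j).trans
        (mul_le_mul_of_nonneg_left (hseg t ht) hκ.le)
  have hi' : ∀ i, |y i - x i| ≤ κ * R * ∑ j, |y j - x j| := by
    intro i
    refine le_trans (le_of_eq ?_) (hi i)
    have := congrFun hxy i
    simp only [Pi.add_apply] at this
    rw [← abs_neg]; congr 1; linarith
  have hs := sum_le_sum fun i (_ : i ∈ univ) => hi' i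
  rw [sum_const, card_univ, Fintype.card_fin, nsmul_eq_mul] at hs
  set D := ∑ j, |y j - x j| with hD
  have hD0 : 0 ≤ D := sum_nonneg fun k _ => abs_nonneg _
  have hlt : m * (κ * R) < 1 := by
    have : m * κ * R < m * κ * r := mul_lt_mul_of_pos_left hRr (by positivity)
    nlinarith
  have hDz : D = 0 := by
    by_contra hne
    have hDpos : 0 < D := lt_of_le_of_ne hD0 (Ne.symm hne)
    nlinarith
  funext i
  have := (sum_eq_zero_iff_of_nonneg (fun k _ => abs_nonneg (y k - x k))).1 hDz i (mem_univ i)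
  have := abs_eq_zero.1 this
  linarith

/-- Factors `x + f x` as an affine map applied to `x + u x`, with `u` vanishing at the origin and
having partial derivatives of size `O(‖x‖₁)`. -/
lemma exists_reduction {B₁ B₂ r : ℝ} (hB₁ : 0 < B₁) (hB₂ : 0 < B₂) (hm : 0 < m)
    (hmB₁ : m * B₁ < 1) (f : (Fin m → ℝ) → Fin m → ℝ) (hf : ContDiff ℝ 2 f)
    (hd1 : ∀ i j : Fin m, |fderiv ℝ (fun x => f x i) 0 (Pi.single j 1)| ≤ B₁)
    (hd2 : ∀ (i j j' : Fin m) (x : Fin m → ℝ), (∑ k, |x k|) < r →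
      |fderiv ℝ (fun y => fderiv ℝ (fun w => f w i) y (Pi.single j 1)) x (Pi.single j' 1)|
        ≤ B₂) :
    ∃ (T : (Fin m → ℝ) →L[ℝ] (Fin m → ℝ)) (c : Fin m → ℝ) (u : (Fin m → ℝ) → Fin m → ℝ),
      (∀ i j, |T (Pi.single j 1) i - (Pi.single j 1 : Fin m → ℝ) i| ≤ B₁) ∧
      (∀ x, x + f x = T (x + u x) + c) ∧ ContDiff ℝ 1 u ∧ u 0 = 0 ∧
      ∀ x : Fin m → ℝ, ∑ k, |x k| < r → ∀ i j,
        |fderiv ℝ (fun y => u y i) x (Pi.single j 1)| ≤ B₂ / (1 - m * B₁) * ∑ k, |x k| := by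
  set a := 1 - m * B₁ with ha
  have ha0 : 0 < a := by linarith
  have hfi : ∀ i, ContDiff ℝ 2 (fun x => f x i) := fun i => contDiff_pi.1 hf i
  have hfd : Differentiable ℝ f := hf.differentiable (by simp)
  have hcoord : ∀ x v i, fderiv ℝ f x v i = fderiv ℝ (fun y => f y i) x v := by
    intro x v i
    rw [fderiv_apply (hfd x)]; rfl
  set A := fderiv ℝ f 0 with hA
  set T : (Fin m → ℝ) →L[ℝ] (Fin m → ℝ) := ContinuousLinearMap.id ℝ _ + A with hT
  have hlow : ∀ x, a * ‖x‖ ≤ ‖T x‖ := by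
    intro x
    have h1 : ‖A x‖ ≤ m * B₁ * ‖x‖ := by
      refine (pi_norm_le_iff_of_nonneg (by positivity)).2 fun i => ?_
      rw [Real.norm_eq_abs, hcoord]
      refine (abs_clm_apply_le _ (hd1 i) x).trans ?_
      have : ∑ j, |x j| ≤ m * ‖x‖ := by
        refine (sum_le_sum fun j _ => norm_le_pi_norm x j).trans ?_
        simp
      nlinarith
    have h2 : ‖x‖ ≤ ‖T x‖ + ‖A x‖ := by
      have : x = T x - A x := by simp [hT]
      calc ‖x‖ = ‖T x - A x‖ := by rw [← this]
        _ ≤ _ := norm_sub_le _ _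
    rw [ha]; linarith
  have hinj : Function.Injective T := by
    rw [injective_iff_map_eq_zero]
    intro x hx
    have := hlow x
    rw [hx, norm_zero] at this
    have h3 : ‖x‖ ≤ 0 := by nlinarith [norm_nonneg x]
    exact norm_le_zero_iff.1 h3
  set E := (LinearEquiv.ofInjectiveEndo (T : (Fin m → ℝ) →ₗ[ℝ] (Fin m → ℝ)) hinj).toContinuousLinearEquiv with hE
  have hET : ∀ x, T (E.symm x) = x := fun x => E.apply_symm_apply x
  set G : (Fin m → ℝ) →L[ℝ] (Fin m → ℝ) := (E.symm : (Fin m → ℝ) →L[ℝ] (Fin m → ℝ)) with hG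
  have hGT : ∀ x, T (G x) = x := hET
  have hGn : ∀ x, ‖G x‖ ≤ ‖x‖ / a := by
    intro x
    rw [le_div_iff₀ ha0, mul_comm]
    simpa [hGT] using hlow (G x)
  set q : (Fin m → ℝ) → Fin m → ℝ := fun x => f x - f 0 - A x with hq
  have hqc : ContDiff ℝ 2 q := (hf.sub contDiff_const).sub A.contDiff
  have huc : ContDiff ℝ 2 (fun x => G (q x)) := G.contDiff.comp hqc
  refine ⟨T, f 0, fun x => G (q x), ?_, ?_, huc.of_le (by norm_num), ?_, ?_⟩
  · intro i j
    have := hd1 i j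
    rw [← hcoord] at this
    simpa [hT] using this
  · intro x
    rw [map_add, hGT]
    simp only [hT, hq, ContinuousLinearMap.add_apply, ContinuousLinearMap.id_apply]
    abel
  · simp [hq]
  · intro x hx i j
    have hqd : fderiv ℝ q x = fderiv ℝ f x - A := by
      refine HasFDerivAt.fderiv ?_
      exact ((hfd x).hasFDerivAt.sub_const (f 0)).sub A.hasFDerivAt
    have hud : fderiv ℝ (fun y => G (q y)) x = G.comp (fderiv ℝ f x - A) := by
      rw [← hqd]
      exact (G.hasFDerivAt.comp x (hqc.differentiable (by simp) x).hasFDerivAt).fderiv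
    have h1 : fderiv ℝ (fun y => G (q y) i) x (Pi.single j 1) =
        G (fderiv ℝ f x (Pi.single j 1) - A (Pi.single j 1)) i := by
      have := fderiv_apply (huc.differentiable (by simp) x) i
      rw [this, hud]; rfl
    rw [h1]
    have hv : ‖fderiv ℝ f x (Pi.single j 1) - A (Pi.single j 1)‖ ≤ B₂ * ∑ k, |x k| := by
      refine (pi_norm_le_iff_of_nonneg (mul_nonneg hB₂.le (sum_nonneg fun k _ => abs_nonneg _))).2
        fun i' => ?_
      rw [Real.norm_eq_abs, Pi.sub_apply, hcoord, hcoord]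
      have := seg_bound (g := fun y => fderiv ℝ (fun w => f w i') y (Pi.single j 1)) (C := B₂)
        (x := 0) (y := x) ?_ ?_
      · simpa using this
      · have : ContDiff ℝ 1 (fun y => fderiv ℝ (fun w => f w i') y (Pi.single j 1)) :=
          ((hfi i').fderiv_right (m := 1) (by norm_num)).clm_apply contDiff_const
        exact this.differentiable (by simp)
      · intro t ht j'
        refine hd2 i' j j' _ ?_
        rw [zero_add, sub_zero, sum_abs_smul, abs_of_nonneg ht.1]
        have : 0 ≤ ∑ k, |x k| := sum_nonneg fun k _ => abs_nonneg _
        nlinarith [ht.2]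
    calc |G (fderiv ℝ f x (Pi.single j 1) - A (Pi.single j 1)) i|
        ≤ ‖G (fderiv ℝ f x (Pi.single j 1) - A (Pi.single j 1))‖ := by
          rw [← Real.norm_eq_abs]; exact norm_le_pi_norm _ i
      _ ≤ _ := hGn _
      _ ≤ (B₂ * ∑ k, |x k|) / a := by gcongr
      _ = _ := by ring
end

/-! ### Affine images of Gaussian measures as blurrings -/

section
variable {m : ℕ}

lemma charFunDual_gaussPi {v : ℝ} (hv : 0 ≤ v) (L : StrongDual ℝ (Fin m → ℝ)) :
    charFunDual (gaussPi m 0 v) L =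
      Complex.exp (-(v * ∑ i, (L (Pi.single i 1) : ℂ) ^ 2 / 2)) := by
  unfold gaussPi
  rw [charFunDual_pi]
  have : ∀ i : Fin m, charFunDual (gaussianReal ((0 : Fin m → ℝ) i) v.toNNReal)
      (L ∘SL ContinuousLinearMap.single ℝ (fun _ => ℝ) i) =
      Complex.exp (-(v * ((L (Pi.single i 1) : ℂ) ^ 2 / 2))) := by
    intro i
    rw [charFunDual_eq_charFun_map_one]
    have h : ⇑(L ∘SL ContinuousLinearMap.single ℝ (fun _ : Fin m => ℝ) i) =
        fun x => L (Pi.single i 1) * x := by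
      ext x
      have : (Pi.single i x : Fin m → ℝ) = x • Pi.single i 1 := by
        rw [← Pi.single_smul]; simp
      simp [this, mul_comm]
    rw [h, charFun_map_mul, charFun_gaussianReal]
    congr 1
    simp [Real.coe_toNNReal _ hv]
    ring
  rw [prod_congr rfl fun i _ => this i, ← Complex.exp_sum, sum_neg_distrib, mul_sum]

/-- The hypothesis says `T Tᵀ = a² I + S Sᵀ`, tested against linear functionals; the two sides then
have the same characteristic function. -/
lemma gauss_affine {a σ : ℝ} (hσ : 0 ≤ σ) (T S : (Fin m → ℝ) →L[ℝ] (Fin m → ℝ)) (c : Fin m → ℝ)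
    (hTS : ∀ L : StrongDual ℝ (Fin m → ℝ), ∑ i, (L (T (Pi.single i 1))) ^ 2 =
      a ^ 2 * ∑ i, (L (Pi.single i 1)) ^ 2 + ∑ i, (L (S (Pi.single i 1))) ^ 2) :
    (gaussPi m 0 σ).map (fun x => T x + c) =
      conv m ((gaussPi m 0 σ).map (fun x => S x + c)) (gaussPi m 0 (a ^ 2 * σ)) := by
  have e : ∀ U : (Fin m → ℝ) →L[ℝ] (Fin m → ℝ), (gaussPi m 0 σ).map (fun x => U x + c) =
      ((gaussPi m 0 σ).map U).map (fun x => x + c) := fun U => by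
    rw [Measure.map_map (by fun_prop) U.continuous.measurable]; rfl
  have : IsProbabilityMeasure ((gaussPi m 0 σ).map (fun x => S x + c)) :=
    Measure.isProbabilityMeasure_map (by fun_prop)
  have : IsFiniteMeasure (conv m ((gaussPi m 0 σ).map (fun x => S x + c)) (gaussPi m 0 (a ^ 2 * σ))) := by
    unfold conv; infer_instance
  refine Measure.ext_of_charFunDual ?_
  ext L
  rw [conv, charFunDual_map_add_prod_eq_mul, Pi.mul_apply, e, e, charFunDual_map_add_const,
    charFunDual_map_add_const, charFunDual_map, charFunDual_map, charFunDual_gaussPi hσ,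
    charFunDual_gaussPi hσ, charFunDual_gaussPi (by positivity), ← Complex.exp_add,
    ← Complex.exp_add, ← Complex.exp_add]
  congr 1
  have h : (∑ i, (L (T (Pi.single i 1)) : ℂ) ^ 2) =
      a ^ 2 * ∑ i, (L (Pi.single i 1) : ℂ) ^ 2 + ∑ i, (L (S (Pi.single i 1)) : ℂ) ^ 2 := by
    exact_mod_cast congrArg (fun x : ℝ => (x : ℂ)) (hTS L)
  simp only [← sum_div, ContinuousLinearMap.comp_apply, h]
  push_cast
  ring

open scoped MatrixOrder Matrix.Norms.L2Operator in
/-- Since `‖Tᵀ t‖₂ ≥ (1 - m B₁) ‖t‖₂`, the matrix `T Tᵀ - (1 - m B₁)² I` is positive semidefinite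
and equals `S Sᵀ` for some `S`; the Gaussian law with covariance `σ S Sᵀ` is the unblurred measure. -/
lemma exists_blur {B₁ σ : ℝ} (hσ : 0 ≤ σ) (hB : 0 < B₁) (hm : 0 < m) (hmB : m * B₁ < 1)
    (T : (Fin m → ℝ) →L[ℝ] (Fin m → ℝ)) (c : Fin m → ℝ)
    (hT : ∀ i j, |T (Pi.single j 1) i - (Pi.single j 1 : Fin m → ℝ) i| ≤ B₁) :
    ∃ Phat : Measure (Fin m → ℝ), IsProbabilityMeasure Phat ∧
      (gaussPi m 0 σ).map (fun x => T x + c) = conv m Phat (gaussPi m 0 ((1 - m * B₁) ^ 2 * σ)) := by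
  set a := 1 - m * B₁ with ha
  set M : Matrix (Fin m) (Fin m) ℝ := Matrix.of fun i j => T (Pi.single j 1) i with hM
  have hm' : (0:ℝ) < m := by exact_mod_cast hm
  have quad : ∀ t : Fin m → ℝ, a ^ 2 * ∑ i, t i ^ 2 ≤ ∑ j, (∑ i, t i * M i j) ^ 2 := by
    intro t
    set w : Fin m → ℝ := fun j => ∑ i, t i * (T (Pi.single j 1) i - (Pi.single j 1 : Fin m → ℝ) i) with hw
    have h1 : ∀ j, ∑ i, t i * M i j = t j + w j := by
      intro j
      simp only [hw, hM, Matrix.of_apply, Pi.sub_apply, mul_sub, sum_sub_distrib]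
      simp [Pi.single_apply]
    have h2 : ∀ j, w j ^ 2 ≤ m * B₁ ^ 2 * ∑ i, t i ^ 2 := by
      intro j
      have h3 : |w j| ≤ ∑ i, |t i| * B₁ := by
        refine (abs_sum_le_sum_abs _ _).trans (sum_le_sum fun i _ => ?_)
        rw [abs_mul]
        exact mul_le_mul_of_nonneg_left (hT i j) (abs_nonneg _)
      have h4 := sq_sum_le_card_mul_sum_sq (s := univ) (f := fun k => |t k|)
      simp only [sq_abs, card_univ, Fintype.card_fin] at h4
      rw [← sum_mul] at h3
      rw [← sq_abs]
      calc |w j| ^ 2 ≤ ((∑ i, |t i|) * B₁) ^ 2 := by gcongr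
        _ = B₁ ^ 2 * (∑ i, |t i|) ^ 2 := by ring
        _ ≤ B₁ ^ 2 * (m * ∑ i, t i ^ 2) := by gcongr
        _ = _ := by ring
    set k := m * B₁ with hk
    have hk0 : 0 < k := by positivity
    have hW : ∑ j, w j ^ 2 ≤ k ^ 2 * ∑ i, t i ^ 2 := by
      refine (sum_le_sum fun j _ => h2 j).trans ?_
      rw [sum_const, card_univ, Fintype.card_fin, nsmul_eq_mul, hk]
      exact le_of_eq (by ring)
    -- Young's inequality with the weight that makes `‖t + w‖² ≥ (1 - k)² ‖t‖²` sharp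
    have h5 : ∀ j, (1 - k) * (k * t j ^ 2) + (k - 1) * w j ^ 2 ≤ k * (t j + w j) ^ 2 := by
      intro j; nlinarith [sq_nonneg (k * t j + w j)]
    have h6 := sum_le_sum fun j (_ : j ∈ univ) => h5 j
    rw [sum_add_distrib, ← mul_sum, ← mul_sum, ← mul_sum, ← mul_sum] at h6
    simp_rw [h1]
    have : k * (a ^ 2 * ∑ i, t i ^ 2) ≤ k * ∑ j, (t j + w j) ^ 2 := by
      rw [ha]; nlinarith
    exact le_of_mul_le_mul_left this hk0
  set K := M * M.transpose - (a ^ 2) • (1 : Matrix (Fin m) (Fin m) ℝ) with hK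
  have hKq : ∀ t : Fin m → ℝ, t ⬝ᵥ K.mulVec t = ∑ j, (∑ i, t i * M i j) ^ 2 - a ^ 2 * ∑ i, t i ^ 2 := by
    intro t
    rw [hK, Matrix.sub_mulVec, dotProduct_sub, ← Matrix.mulVec_mulVec, Matrix.dotProduct_mulVec,
      Matrix.smul_mulVec, Matrix.one_mulVec, dotProduct_smul, ← Matrix.vecMul_transpose,
      Matrix.transpose_transpose]
    simp [dotProduct, Matrix.vecMul, sq]
  have hpsd : K.PosSemidef := by
    refine Matrix.PosSemidef.of_dotProduct_mulVec_nonneg ?_ fun t => ?_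
    · ext i j
      simp [hK, Matrix.mul_apply, Matrix.one_apply, eq_comm, mul_comm]
    · rw [star_trivial, hKq]; linarith [quad t]
  obtain ⟨N, hN⟩ := CStarAlgebra.nonneg_iff_eq_star_mul_self.mp hpsd.nonneg
  set S : (Fin m → ℝ) →L[ℝ] (Fin m → ℝ) := LinearMap.toContinuousLinearMap (Matrix.toLin' N.transpose)
  refine ⟨(gaussPi m 0 σ).map (fun x => S x + c), Measure.isProbabilityMeasure_map (by fun_prop),
    gauss_affine hσ T S c fun L => ?_⟩
  have hL : ∀ x : Fin m → ℝ, L x = ∑ i, L (Pi.single i 1) * x i := by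
    intro x
    conv_lhs => rw [pi_eq_sum_univ' x, map_sum]
    refine sum_congr rfl fun i _ => ?_
    rw [map_smul, smul_eq_mul, mul_comm]
  have e1 : ∑ j, (L (T (Pi.single j 1))) ^ 2 = ∑ j, (∑ i, L (Pi.single i 1) * M i j) ^ 2 :=
    sum_congr rfl fun j _ => by rw [hL (T (Pi.single j 1))]; rfl
  have e2 : ∑ j, (L (S (Pi.single j 1))) ^ 2 = (fun i => L (Pi.single i 1)) ⬝ᵥ K.mulVec (fun i => L (Pi.single i 1)) := by
    have hS : ∀ j, L (S (Pi.single j 1)) = N.mulVec (fun i => L (Pi.single i 1)) j := by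
      intro j
      rw [hL (S (Pi.single j 1))]
      simp [S, Matrix.mulVec, dotProduct, mul_comm, Pi.single_apply]
    rw [hN, ← Matrix.mulVec_mulVec, Matrix.dotProduct_mulVec, Matrix.star_eq_conjTranspose,
      Matrix.conjTranspose_eq_transpose_of_trivial, Matrix.vecMul_transpose]
    simp only [hS, dotProduct, sq]
  rw [e1, e2, hKq]
  ring
end

/-! ### Change of variables and the pointwise deficit -/

section
variable {m : ℕ} {σ : ℝ}

lemma measurableSet_l1Ball (r : ℝ) : MeasurableSet {x : Fin m → ℝ | ∑ k, |x k| < r} :=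
  measurableSet_lt (by fun_prop) measurable_const

lemma density_shift (hσ : 0 < σ) (x v : Fin m → ℝ) :
    ∏ i, gaussianPDFReal 0 σ.toNNReal ((x + v) i) =
      (∏ i, gaussianPDFReal 0 σ.toNNReal (x i)) *
        Real.exp (-∑ i, (x i * v i / σ + v i ^ 2 / (2 * σ))) := by
  rw [← sum_neg_distrib, Real.exp_sum, ← prod_mul_distrib]
  refine prod_congr rfl fun i _ => ?_
  simp only [gaussianPDFReal, Real.coe_toNNReal _ hσ.le, Pi.add_apply]
  rw [mul_assoc (Real.sqrt (2 * Real.pi * σ))⁻¹, ← Real.exp_add]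
  congr 2
  field_simp
  ring

/-- Here `|det| * exp (…)` is the density at `x` of the pull-back of the Gaussian measure along
`x ↦ x + u x`, relative to the Gaussian measure itself. -/
lemma change_of_variables (hσ : 0 < σ) {r : ℝ} {u : (Fin m → ℝ) → Fin m → ℝ}
    (hu : Differentiable ℝ u)
    (hinj : Set.InjOn (fun x => x + u x) {x | ∑ k, |x k| < r})
    (G : (Fin m → ℝ) → ENNReal) (hG : Measurable G)
    (hpt : ∀ x : Fin m → ℝ, ∑ k, |x k| < r →
      1 ≤ ENNReal.ofReal (|(ContinuousLinearMap.id ℝ _ + fderiv ℝ u x).det| *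
        Real.exp (-∑ i, (x i * u x i / σ + u x i ^ 2 / (2 * σ)))) + G x)
    {A : Set (Fin m → ℝ)} (hA : MeasurableSet A) :
    gaussPi m 0 σ ((fun x => x + u x) ⁻¹' A) ≤
      gaussPi m 0 σ A + (∫⁻ x in {x | ∑ k, |x k| < r}, G x ∂(gaussPi m 0 σ) +
        gaussPi m 0 σ {x | ∑ k, |x k| < r}ᶜ) := by
  set B : Set (Fin m → ℝ) := {x | ∑ k, |x k| < r} with hBdef
  have hB : MeasurableSet B := measurableSet_l1Ball r
  have hhm : Measurable (fun x => x + u x) := (continuous_id.add hu.continuous).measurable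
  set S := B ∩ (fun x => x + u x) ⁻¹' A with hS
  have hSm : MeasurableSet S := hB.inter (hhm hA)
  set p : (Fin m → ℝ) → ℝ := fun x => ∏ i, gaussianPDFReal 0 σ.toNNReal (x i) with hp
  have hp0 : ∀ x, 0 ≤ p x := fun x => prod_nonneg fun i _ => gaussianPDFReal_nonneg 0 _ _
  have hpm : Measurable fun x => ENNReal.ofReal (p x) := by
    refine ENNReal.measurable_ofReal.comp ?_
    exact Finset.measurable_prod _ fun i _ => (measurable_gaussianPDFReal 0 _).comp (measurable_pi_apply i)
  set w : (Fin m → ℝ) → ℝ := fun x => |(ContinuousLinearMap.id ℝ _ + fderiv ℝ u x).det| *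
        Real.exp (-∑ i, (x i * u x i / σ + u x i ^ 2 / (2 * σ))) with hw
  have h1 : gaussPi m 0 σ ((fun x => x + u x) ⁻¹' A) ≤ gaussPi m 0 σ S + gaussPi m 0 σ Bᶜ := by
    refine (measure_mono ?_).trans (measure_union_le _ _)
    intro x hx
    by_cases h : x ∈ B
    · exact Or.inl ⟨h, hx⟩
    · exact Or.inr h
  have h2 : gaussPi m 0 σ S ≤ ∫⁻ x in S, ENNReal.ofReal (w x) ∂(gaussPi m 0 σ) +
      ∫⁻ x in S, G x ∂(gaussPi m 0 σ) := by
    rw [← lintegral_add_right _ hG]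
    calc gaussPi m 0 σ S = ∫⁻ x in S, 1 ∂(gaussPi m 0 σ) := by simp
      _ ≤ _ := setLIntegral_mono' hSm fun x hx => hpt x hx.1
  have h3 : ∫⁻ x in S, ENNReal.ofReal (w x) ∂(gaussPi m 0 σ) ≤ gaussPi m 0 σ A := by
    rw [gaussPi_eq_withDensity hσ, withDensity_apply _ hA,
      setLIntegral_withDensity_eq_setLIntegral_mul_non_measurable _ hpm _ hSm
        (ae_of_all _ fun x => ENNReal.ofReal_lt_top)]
    have himg : (fun x => x + u x) '' S ⊆ A := by
      rintro _ ⟨x, hx, rfl⟩; exact hx.2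
    refine le_trans (le_of_eq ?_) (lintegral_mono_set himg)
    rw [lintegral_image_eq_lintegral_abs_det_fderiv_mul volume hSm
      (f := fun x => x + u x)
      (f' := fun x => ContinuousLinearMap.id ℝ _ + fderiv ℝ u x)
      (fun x _ => ((hasFDerivAt_id x).add (hu x).hasFDerivAt).hasFDerivWithinAt)
      (hinj.mono Set.inter_subset_left)]
    refine lintegral_congr fun x => ?_
    rw [Pi.mul_apply, ← ENNReal.ofReal_mul (hp0 x), ← ENNReal.ofReal_mul (abs_nonneg _)]
    congr 1
    simp only [hw]
    rw [density_shift hσ x (u x)]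
    simp only [hp]
    ring
  have h4 : ∫⁻ x in S, G x ∂(gaussPi m 0 σ) ≤ ∫⁻ x in B, G x ∂(gaussPi m 0 σ) :=
    lintegral_mono_set Set.inter_subset_left
  calc _ ≤ _ := h1
    _ ≤ (gaussPi m 0 σ A + ∫⁻ x in B, G x ∂(gaussPi m 0 σ)) + gaussPi m 0 σ Bᶜ :=
        add_le_add_left (h2.trans (add_le_add h3 h4)) _
    _ = _ := by rw [add_assoc]

lemma det_id_add (hm : 0 < m) {u : (Fin m → ℝ) → Fin m → ℝ} (hu : Differentiable ℝ u)
    {c : ℝ} {x : Fin m → ℝ} (hc0 : 0 ≤ c) (hc : m * c < 1)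
    (h : ∀ i j, |fderiv ℝ (fun y => u y i) x (Pi.single j 1)| ≤ c) :
    1 - (m - 1) * c - ∑ i, max (-fderiv ℝ (fun y => u y i) x (Pi.single i 1)) 0 ≤
      (ContinuousLinearMap.id ℝ _ + fderiv ℝ u x).det := by
  set N : Matrix (Fin m) (Fin m) ℝ := LinearMap.toMatrix' (fderiv ℝ u x : (Fin m → ℝ) →ₗ[ℝ] _) with hN
  have hNe : ∀ i j, N i j = fderiv ℝ (fun y => u y i) x (Pi.single j 1) := by
    intro i j
    rw [hN, LinearMap.toMatrix'_apply, fderiv_apply (hu x) i]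
    simp
  have hdet : (ContinuousLinearMap.id ℝ _ + fderiv ℝ u x).det = (1 + N).det := by
    rw [ContinuousLinearMap.det, ← LinearMap.det_toMatrix']
    congr 1
    rw [ContinuousLinearMap.toLinearMap_add, map_add]
    congr 1
    exact LinearMap.toMatrix'_id
  rw [hdet]
  have := one_sub_diag_le_det N c (fun i j => by rw [hNe]; exact h i j) hc0 hm hc
  simpa only [hNe] using this

/-- An upper bound for the amount by which the pulled-back Gaussian density falls short of one, for
`‖x‖₁ < r`. The first three sums bound the exponent (the part of `x_i u_i` vanishing with `x_i`,
its Taylor remainder, and `u_i²`), the last two terms bound the loss in the determinant. -/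
noncomputable def defect (m : ℕ) (σ κ : ℝ) (u : (Fin m → ℝ) → Fin m → ℝ) (x : Fin m → ℝ) : ENNReal :=
  ∑ i, ENNReal.ofReal σ⁻¹ * ENNReal.ofReal (x i * (u x i - u (Function.update x i 0) i)) +
  (∑ i, ENNReal.ofReal (κ / (2 * σ)) * ENNReal.ofReal (|x i| * (∑ k ∈ univ.erase i, |x k|) ^ 2) +
  (∑ k, ENNReal.ofReal (κ ^ 2 * m ^ 4 / (8 * σ)) * ENNReal.ofReal (x k ^ 4) +
  (∑ i, ENNReal.ofReal (-fderiv ℝ (fun y => u y i) x (Pi.single i 1)) +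
  ENNReal.ofReal ((m - 1) * κ) * ENNReal.ofReal (∑ k, |x k|))))

lemma sum_pow_four (x : Fin m → ℝ) : (∑ k, |x k|) ^ 4 ≤ m ^ 3 * ∑ k, x k ^ 4 := by
  have h := pow_sum_le_card_mul_sum_pow (s := univ) (f := fun k => |x k|)
    (fun k _ => abs_nonneg _) 3
  have e : ∀ k, |x k| ^ (3 + 1) = x k ^ 4 := fun k => Even.pow_abs (by decide) _
  simpa only [e, card_univ, Fintype.card_fin] using h

lemma one_le_of_defect {D E Y d : ℝ} (hD : 0 ≤ D) (hY : 0 ≤ Y) (hd : 0 ≤ d)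
    (hDd : 1 - d ≤ D) (hE : 1 - Y ≤ E) (hE0 : 0 ≤ E) : 1 ≤ D * E + Y + d := by
  rcases le_or_gt 1 d with h1 | h1
  · have : 0 ≤ D * E := by positivity
    linarith
  · have h2 : (1 - d) * E ≤ D * E := by gcongr
    have h3 : (1 - d) * (1 - Y) ≤ (1 - d) * E :=
      mul_le_mul_of_nonneg_left hE (by linarith)
    nlinarith [mul_nonneg hd hY]

/-- The function `defect` dominates the deficit of the pulled-back density, by
`1 ≤ D * exp (-y) + Y + d` for `D ≥ 1 - d` and `y ≤ Y`. -/
lemma defect_pointwise (hm : 0 < m) (hσ : 0 < σ) {κ r : ℝ} (hκ : 0 < κ) (hr : m * κ * r ≤ 1)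
    {u : (Fin m → ℝ) → Fin m → ℝ} (hu : Differentiable ℝ u) (hu0 : u 0 = 0)
    (h : ∀ x : Fin m → ℝ, ∑ k, |x k| < r → ∀ i j,
      |fderiv ℝ (fun y => u y i) x (Pi.single j 1)| ≤ κ * ∑ k, |x k|)
    (x : Fin m → ℝ) (hx : ∑ k, |x k| < r) :
    1 ≤ ENNReal.ofReal (|(ContinuousLinearMap.id ℝ _ + fderiv ℝ u x).det| *
        Real.exp (-∑ i, (x i * u x i / σ + u x i ^ 2 / (2 * σ)))) + defect m σ κ u x := by
  have hm' : (0:ℝ) < m := by exact_mod_cast hm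
  have hm1 : (1:ℝ) ≤ m := by exact_mod_cast hm
  set N := ∑ k, |x k| with hN
  have hN0 : 0 ≤ N := sum_nonneg fun k _ => abs_nonneg _
  have ht : ∀ i, ∀ z : Fin m → ℝ, ∑ k, |z k| < r → |u z i| ≤ κ * (∑ k, |z k|) ^ 2 / 2 :=
    fun i z hz => taylor_bound (g := fun y => u y i) (fun y => by fun_prop) (by simp [hu0])
      (fun y hy j => h y hy i j) hz
  have hc : m * (κ * N) < 1 := by
    have : m * κ * N < m * κ * r := mul_lt_mul_of_pos_left hx (by positivity)
    nlinarith
  have hdet := det_id_add hm hu (mul_nonneg hκ.le hN0) hc (h x hx)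
  set D := (ContinuousLinearMap.id ℝ _ + fderiv ℝ u x).det with hD
  set Y1 := ∑ i, max (x i * (u x i - u (Function.update x i 0) i)) 0 with hY1
  set Y2 := ∑ i, |x i| * (∑ k ∈ univ.erase i, |x k|) ^ 2 with hY2
  set Y3 := ∑ k, x k ^ 4 with hY3
  set d1 := ∑ i, max (-fderiv ℝ (fun y => u y i) x (Pi.single i 1)) 0 with hd1
  have hY1n : 0 ≤ Y1 := sum_nonneg fun i _ => le_max_right _ _
  have hY2n : 0 ≤ Y2 := sum_nonneg fun i _ => by positivity
  have hY3n : 0 ≤ Y3 := sum_nonneg fun i _ => by positivity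
  have hd1n : 0 ≤ d1 := sum_nonneg fun i _ => le_max_right _ _
  have hdef : defect m σ κ u x = ENNReal.ofReal (σ⁻¹ * Y1 + κ / (2 * σ) * Y2 +
      κ ^ 2 * m ^ 4 / (8 * σ) * Y3 + d1 + (m - 1) * κ * N) := by
    have e : ∀ t : ℝ, ENNReal.ofReal (max t 0) = ENNReal.ofReal t := fun t => by simp
    have hm0 : (0:ℝ) ≤ (m - 1) * κ := mul_nonneg (by linarith) hκ.le
    have q1 : ∑ i, ENNReal.ofReal (x i * (u x i - u (Function.update x i 0) i)) =
        ENNReal.ofReal Y1 := by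
      rw [hY1, ENNReal.ofReal_sum_of_nonneg fun i _ => le_max_right _ _]
      exact sum_congr rfl fun i _ => (e _).symm
    have q2 : ∑ i, ENNReal.ofReal (|x i| * (∑ k ∈ univ.erase i, |x k|) ^ 2) =
        ENNReal.ofReal Y2 := by
      rw [hY2, ENNReal.ofReal_sum_of_nonneg fun i _ => by positivity]
    have q3 : ∑ k, ENNReal.ofReal (x k ^ 4) = ENNReal.ofReal Y3 := by
      rw [hY3, ENNReal.ofReal_sum_of_nonneg fun i _ => by positivity]
    have q4 : ∑ i, ENNReal.ofReal (-fderiv ℝ (fun y => u y i) x (Pi.single i 1)) =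
        ENNReal.ofReal d1 := by
      rw [hd1, ENNReal.ofReal_sum_of_nonneg fun i _ => le_max_right _ _]
      exact sum_congr rfl fun i _ => (e _).symm
    rw [defect, ← mul_sum, ← mul_sum, ← mul_sum, q1, q2, q3, q4, ← hN,
      ← ENNReal.ofReal_mul (by positivity), ← ENNReal.ofReal_mul (by positivity),
      ← ENNReal.ofReal_mul (by positivity), ← ENNReal.ofReal_mul hm0,
      ← ENNReal.ofReal_add hd1n (by positivity), ← ENNReal.ofReal_add (by positivity) (by positivity),
      ← ENNReal.ofReal_add (by positivity) (by positivity),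
      ← ENNReal.ofReal_add (by positivity) (by positivity)]
    congr 1
    ring
  set y := ∑ i, (x i * u x i / σ + u x i ^ 2 / (2 * σ)) with hy
  set Y := σ⁻¹ * Y1 + κ / (2 * σ) * Y2 + κ ^ 2 * m ^ 4 / (8 * σ) * Y3 with hY
  have hY0 : 0 ≤ Y := by positivity
  have hyY : y ≤ Y := by
    have t1 : ∀ i, x i * u x i / σ + u x i ^ 2 / (2 * σ) ≤
        σ⁻¹ * max (x i * (u x i - u (Function.update x i 0) i)) 0 +
        κ / (2 * σ) * (|x i| * (∑ k ∈ univ.erase i, |x k|) ^ 2) + κ ^ 2 * N ^ 4 / (8 * σ) := by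
      intro i
      have hz : ∑ k, |Function.update x i 0 k| = ∑ k ∈ univ.erase i, |x k| := by
        rw [sum_abs_update]; simp
      have hz' : ∑ k ∈ univ.erase i, |x k| ≤ N :=
        sum_le_sum_of_subset_of_nonneg (erase_subset _ _) fun k _ _ => abs_nonneg _
      have b1 := ht i (Function.update x i 0) (by rw [hz]; exact hz'.trans_lt hx)
      rw [hz] at b1
      have b2 := ht i x hx
      rw [← hN] at b2
      have b3 : x i * u (Function.update x i 0) i ≤ |x i| * (κ * (∑ k ∈ univ.erase i, |x k|) ^ 2 / 2) :=
        (le_abs_self _).trans (by rw [abs_mul]; gcongr)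
      have b4 : u x i ^ 2 ≤ (κ * N ^ 2 / 2) ^ 2 := by
        rw [← sq_abs]; gcongr
      have b5 := le_max_left (x i * (u x i - u (Function.update x i 0) i)) 0
      have : σ * (x i * u x i / σ + u x i ^ 2 / (2 * σ)) ≤ σ * (
        σ⁻¹ * max (x i * (u x i - u (Function.update x i 0) i)) 0 +
        κ / (2 * σ) * (|x i| * (∑ k ∈ univ.erase i, |x k|) ^ 2) + κ ^ 2 * N ^ 4 / (8 * σ)) := by
        have e1 : σ * (x i * u x i / σ + u x i ^ 2 / (2 * σ)) = x i * u x i + u x i ^ 2 / 2 := by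
          field_simp
        have e2 : σ * (σ⁻¹ * max (x i * (u x i - u (Function.update x i 0) i)) 0 +
          κ / (2 * σ) * (|x i| * (∑ k ∈ univ.erase i, |x k|) ^ 2) + κ ^ 2 * N ^ 4 / (8 * σ)) =
          max (x i * (u x i - u (Function.update x i 0) i)) 0 +
          |x i| * (κ * (∑ k ∈ univ.erase i, |x k|) ^ 2 / 2) + κ ^ 2 * N ^ 4 / 8 := by
          field_simp
        rw [e1, e2]
        nlinarith
      exact le_of_mul_le_mul_left this hσ
    refine (sum_le_sum fun i _ => t1 i).trans ?_
    rw [sum_add_distrib, sum_add_distrib, ← mul_sum, ← mul_sum, sum_const, card_univ,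
      Fintype.card_fin, nsmul_eq_mul, hY]
    have t2 : m * (κ ^ 2 * N ^ 4 / (8 * σ)) ≤ κ ^ 2 * m ^ 4 / (8 * σ) * Y3 := by
      calc m * (κ ^ 2 * N ^ 4 / (8 * σ)) = m * κ ^ 2 / (8 * σ) * N ^ 4 := by ring
        _ ≤ m * κ ^ 2 / (8 * σ) * (m ^ 3 * Y3) := by
            gcongr; exact sum_pow_four x
        _ = _ := by ring
    linarith
  rw [hdef, ← ENNReal.ofReal_add (by positivity)
    (by have : (0:ℝ) ≤ (m - 1) * κ := mul_nonneg (by linarith) hκ.le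
        positivity), ENNReal.one_le_ofReal]
  set d := d1 + (m - 1) * κ * N with hd
  have hDd : 1 - d ≤ |D| := by
    refine le_trans ?_ (le_abs_self D)
    rw [hd]; linarith
  have hdn : 0 ≤ d := by
    have : (0:ℝ) ≤ (m - 1) * κ := mul_nonneg (by linarith) hκ.le
    positivity
  have hexp : Real.exp (-Y) ≤ Real.exp (-y) := Real.exp_le_exp.2 (by linarith)
  have hexp2 := Real.add_one_le_exp (-Y)
  have hfin := one_le_of_defect (abs_nonneg D) hY0 hdn hDd (by linarith : 1 - Y ≤ Real.exp (-y))
    (Real.exp_pos _).le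
  linarith
end

/-! ### Integrating the deficit -/

section
variable {m : ℕ} {σ : ℝ}

lemma continuous_partial {u : (Fin m → ℝ) → Fin m → ℝ} (hu : ContDiff ℝ 1 u) (i j : Fin m) :
    Continuous fun x => fderiv ℝ (fun y => u y i) x (Pi.single j 1) := by
  have : ContDiff ℝ 1 fun y => u y i := contDiff_pi.1 hu i
  exact (this.continuous_fderiv one_ne_zero).clm_apply continuous_const

lemma measurable_defect {κ : ℝ} {u : (Fin m → ℝ) → Fin m → ℝ} (hu : ContDiff ℝ 1 u) :
    Measurable (defect m σ κ u) := by
  have hc := hu.continuous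
  have hp := fun i => continuous_partial hu i i
  unfold defect
  have h1 : ∀ i, Continuous fun x : Fin m → ℝ => x i * (u x i - u (Function.update x i 0) i) := by
    intro i
    have : Continuous fun x : Fin m → ℝ => Function.update x i (0:ℝ) :=
      continuous_id.update i continuous_const
    fun_prop
  refine Measurable.add ?_ (.add ?_ (.add ?_ (.add ?_ ?_)))
  · exact Finset.measurable_fun_sum _ fun i _ => (h1 i).measurable.ennreal_ofReal.const_mul _
  · exact Finset.measurable_fun_sum _ fun i _ => by fun_prop
  · exact Finset.measurable_fun_sum _ fun i _ => by fun_prop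
  · exact Finset.measurable_fun_sum _ fun i _ => (hp i).neg.measurable.ennreal_ofReal
  · fun_prop

/-- The first and fourth summands of `defect` are combined through Stein's inequality, and the
complement of the ball absorbs the missing part of the integral of `‖x‖₁`. -/
lemma lintegral_defect_add_le (hm : 0 < m) (hσ : 0 < σ) {κ r : ℝ} (hκ : 0 < κ)
    (hr : m * κ * r ≤ 1) (hr1 : m * Real.sqrt (2 * σ / Real.pi) < r)
    {u : (Fin m → ℝ) → Fin m → ℝ} (hu : ContDiff ℝ 1 u)
    (h : ∀ x : Fin m → ℝ, ∑ k, |x k| < r → ∀ i j,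
      |fderiv ℝ (fun y => u y i) x (Pi.single j 1)| ≤ κ * ∑ k, |x k|) :
    ∫⁻ x in {x | ∑ k, |x k| < r}, defect m σ κ u x ∂(gaussPi m 0 σ) +
        gaussPi m 0 σ {x | ∑ k, |x k| < r}ᶜ ≤
      ENNReal.ofReal (m * κ * (m * Real.sqrt (2 * σ / Real.pi)) +
        (m - 1) * κ * (m * Real.sqrt (2 * σ / Real.pi)) +
        m * (κ / (2 * σ) * (Real.sqrt (2 * σ / Real.pi) * ((m - 1) ^ 2 * σ))) +
        m * (κ ^ 2 * m ^ 4 / (8 * σ) * (3 * σ ^ 2)) +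
        (1 - m * κ * r) *
          Real.exp (-(r / (2 * Real.sqrt σ) - m / Real.sqrt (2 * Real.pi)) ^ 2 / m)) := by
  have hm' : (0:ℝ) < m := by exact_mod_cast hm
  have hm1 : (1:ℝ) ≤ m := by exact_mod_cast hm
  set s := Real.sqrt (2 * σ / Real.pi) with hs
  have hs0 : 0 ≤ s := Real.sqrt_nonneg _
  set E := Real.exp (-(r / (2 * Real.sqrt σ) - m / Real.sqrt (2 * Real.pi)) ^ 2 / m) with hE
  set γ := gaussPi m 0 σ with hγ
  set B : Set (Fin m → ℝ) := {x | ∑ k, |x k| < r} with hBdef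
  have hB : MeasurableSet B := measurableSet_l1Ball r
  set n : Fin m → (Fin m → ℝ) → ℝ := fun i x => fderiv ℝ (fun y => u y i) x (Pi.single i 1) with hn
  have hnc : ∀ i, Continuous (n i) := fun i => continuous_partial hu i i
  have hm0 : (0:ℝ) ≤ (m - 1) * κ := mul_nonneg (by linarith) hκ.le
  have hc := hu.continuous
  have h1c : ∀ i, Continuous fun x : Fin m → ℝ => x i * (u x i - u (Function.update x i 0) i) := by
    intro i
    have : Continuous fun x : Fin m → ℝ => Function.update x i (0:ℝ) :=
      continuous_id.update i continuous_const
    fun_prop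
  have hsplit : ∫⁻ x in B, defect m σ κ u x ∂γ =
      (∑ i, ENNReal.ofReal σ⁻¹ *
        ∫⁻ x in B, ENNReal.ofReal (x i * (u x i - u (Function.update x i 0) i)) ∂γ) +
      ((∑ i, ENNReal.ofReal (κ / (2 * σ)) *
        ∫⁻ x in B, ENNReal.ofReal (|x i| * (∑ k ∈ univ.erase i, |x k|) ^ 2) ∂γ) +
      ((∑ i, ENNReal.ofReal (κ ^ 2 * m ^ 4 / (8 * σ)) * ∫⁻ x in B, ENNReal.ofReal (x i ^ 4) ∂γ) +
      ((∑ i, ∫⁻ x in B, ENNReal.ofReal (-n i x) ∂γ) +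
      ENNReal.ofReal ((m - 1) * κ) * ∫⁻ x in B, ENNReal.ofReal (∑ k, |x k|) ∂γ))) := by
    have m1 : ∀ i, Measurable fun x : Fin m → ℝ =>
        ENNReal.ofReal (x i * (u x i - u (Function.update x i 0) i)) :=
      fun i => (h1c i).measurable.ennreal_ofReal
    have m2 : ∀ i, Measurable fun x : Fin m → ℝ =>
        ENNReal.ofReal (|x i| * (∑ k ∈ univ.erase i, |x k|) ^ 2) := fun i => by fun_prop
    have m3 : ∀ i, Measurable fun x : Fin m → ℝ => ENNReal.ofReal (x i ^ 4) :=
      fun i => by fun_prop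
    have m4 : ∀ i, Measurable fun x : Fin m → ℝ => ENNReal.ofReal (-n i x) :=
      fun i => (hnc i).neg.measurable.ennreal_ofReal
    have m5 : Measurable fun x : Fin m → ℝ => ENNReal.ofReal (∑ k, |x k|) := by fun_prop
    unfold defect
    rw [lintegral_add_left (Finset.measurable_fun_sum _ fun i _ => (m1 i).const_mul _),
      lintegral_add_left (Finset.measurable_fun_sum _ fun i _ => (m2 i).const_mul _),
      lintegral_add_left (Finset.measurable_fun_sum _ fun i _ => (m3 i).const_mul _),
      lintegral_add_left (Finset.measurable_fun_sum _ fun i _ => m4 i),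
      lintegral_finsetSum _ fun i _ => (m1 i).const_mul _,
      lintegral_finsetSum _ fun i _ => (m2 i).const_mul _,
      lintegral_finsetSum _ fun i _ => (m3 i).const_mul _,
      lintegral_finsetSum _ fun i _ => m4 i,
      lintegral_const_mul _ m5]
    simp_rw [lintegral_const_mul _ (m1 _), lintegral_const_mul _ (m2 _),
      lintegral_const_mul _ (m3 _)]
  have hstein : ∀ i, ENNReal.ofReal σ⁻¹ *
        ∫⁻ x in B, ENNReal.ofReal (x i * (u x i - u (Function.update x i 0) i)) ∂γ ≤
      ∫⁻ x in B, ENNReal.ofReal (n i x) ∂γ := by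
    intro i
    have := gaussPi_stein hσ r i (fun y => u y i) (contDiff_pi.1 hu i)
    calc _ ≤ ENNReal.ofReal σ⁻¹ * ∫⁻ x in B, ENNReal.ofReal (σ * n i x) ∂γ := by gcongr
      _ = _ := by
        rw [← lintegral_const_mul _ (by have := hnc i; fun_prop)]
        refine lintegral_congr fun x => ?_
        rw [← ENNReal.ofReal_mul (by positivity), inv_mul_cancel_left₀ hσ.ne']
  set NB := ∫⁻ x in B, ENNReal.ofReal (∑ k, |x k|) ∂γ with hNB
  set NC := ∫⁻ x in Bᶜ, ENNReal.ofReal (∑ k, |x k|) ∂γ with hNC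
  have hN : NB + NC = ENNReal.ofReal (m * s) := by
    rw [hNB, hNC, lintegral_add_compl _ hB]
    exact gaussPi_norm hσ
  have hI14 : (∑ i, ENNReal.ofReal σ⁻¹ *
        ∫⁻ x in B, ENNReal.ofReal (x i * (u x i - u (Function.update x i 0) i)) ∂γ) +
      (∑ i, ∫⁻ x in B, ENNReal.ofReal (-n i x) ∂γ) ≤ ENNReal.ofReal (m * κ) * NB := by
    rw [← sum_add_distrib]
    have : ∀ i, ENNReal.ofReal σ⁻¹ *
        ∫⁻ x in B, ENNReal.ofReal (x i * (u x i - u (Function.update x i 0) i)) ∂γ +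
        ∫⁻ x in B, ENNReal.ofReal (-n i x) ∂γ ≤ ENNReal.ofReal κ * NB := by
      intro i
      refine (add_le_add_left (hstein i) _).trans ?_
      rw [← lintegral_add_left (hnc i).measurable.ennreal_ofReal, hNB,
        ← lintegral_const_mul _ (by fun_prop)]
      refine setLIntegral_mono' hB fun x hx => ?_
      rw [← ENNReal.ofReal_mul hκ.le]
      have hb := h x hx i i
      rcases le_total 0 (n i x) with h0 | h0
      · rw [ENNReal.ofReal_of_nonpos (p := -n i x) (by linarith), add_zero]
        exact ENNReal.ofReal_le_ofReal ((le_abs_self _).trans hb)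
      · rw [ENNReal.ofReal_of_nonpos h0, zero_add]
        exact ENNReal.ofReal_le_ofReal ((neg_le_abs _).trans hb)
    refine (sum_le_sum fun i _ => this i).trans (le_of_eq ?_)
    rw [sum_const, card_univ, Fintype.card_fin, nsmul_eq_mul, ENNReal.ofReal_mul hm'.le,
      ENNReal.ofReal_natCast, mul_assoc]
  have hI2 : (∑ i, ENNReal.ofReal (κ / (2 * σ)) *
        ∫⁻ x in B, ENNReal.ofReal (|x i| * (∑ k ∈ univ.erase i, |x k|) ^ 2) ∂γ) ≤
      ENNReal.ofReal (m * (κ / (2 * σ) * (s * ((m - 1) ^ 2 * σ)))) := by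
    have : ∀ i, ENNReal.ofReal (κ / (2 * σ)) *
        ∫⁻ x in B, ENNReal.ofReal (|x i| * (∑ k ∈ univ.erase i, |x k|) ^ 2) ∂γ ≤
        ENNReal.ofReal (κ / (2 * σ) * (s * ((m - 1) ^ 2 * σ))) := by
      intro i
      rw [ENNReal.ofReal_mul (by positivity)]
      gcongr
      exact (setLIntegral_le_lintegral _ _).trans (gaussPi_mix hσ i)
    refine (sum_le_sum fun i _ => this i).trans (le_of_eq ?_)
    rw [sum_const, card_univ, Fintype.card_fin, nsmul_eq_mul, ENNReal.ofReal_mul hm'.le,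
      ENNReal.ofReal_natCast]
  have hI3 : (∑ i, ENNReal.ofReal (κ ^ 2 * m ^ 4 / (8 * σ)) *
        ∫⁻ x in B, ENNReal.ofReal (x i ^ 4) ∂γ) ≤
      ENNReal.ofReal (m * (κ ^ 2 * m ^ 4 / (8 * σ) * (3 * σ ^ 2))) := by
    have : ∀ i, ENNReal.ofReal (κ ^ 2 * m ^ 4 / (8 * σ)) *
        ∫⁻ x in B, ENNReal.ofReal (x i ^ 4) ∂γ ≤
        ENNReal.ofReal (κ ^ 2 * m ^ 4 / (8 * σ) * (3 * σ ^ 2)) := by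
      intro i
      rw [ENNReal.ofReal_mul (by positivity)]
      gcongr
      exact gaussPi_four hσ r i
    refine (sum_le_sum fun i _ => this i).trans (le_of_eq ?_)
    rw [sum_const, card_univ, Fintype.card_fin, nsmul_eq_mul, ENNReal.ofReal_mul hm'.le,
      ENNReal.ofReal_natCast]
  have hI5 : ENNReal.ofReal ((m - 1) * κ) * NB ≤ ENNReal.ofReal ((m - 1) * κ * (m * s)) := by
    rw [ENNReal.ofReal_mul hm0, ← hN]
    gcongr
    exact le_self_add
  have hout : γ Bᶜ ≤ ENNReal.ofReal ((1 - m * κ * r) * E) + ENNReal.ofReal (m * κ) * NC := by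
    calc γ Bᶜ = ∫⁻ x in Bᶜ, 1 ∂γ := by simp
      _ ≤ ∫⁻ x in Bᶜ, (ENNReal.ofReal (1 - m * κ * r) +
          ENNReal.ofReal (m * κ) * ENNReal.ofReal (∑ k, |x k|)) ∂γ := by
        refine setLIntegral_mono' hB.compl fun x hx => ?_
        have hx' : r ≤ ∑ k, |x k| := not_lt.1 hx
        have h0 : 0 ≤ ∑ k, |x k| := sum_nonneg fun k _ => abs_nonneg _
        rw [← ENNReal.ofReal_mul (by positivity), ← ENNReal.ofReal_add (by linarith) (by positivity),
          ENNReal.one_le_ofReal]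
        have : m * κ * r ≤ m * κ * ∑ k, |x k| := by gcongr
        linarith
      _ = ENNReal.ofReal (1 - m * κ * r) * γ Bᶜ + ENNReal.ofReal (m * κ) * NC := by
        rw [lintegral_add_left measurable_const, lintegral_const_mul _ (by fun_prop),
          setLIntegral_const]
      _ ≤ _ := by
        rw [ENNReal.ofReal_mul (by linarith : 0 ≤ 1 - m * κ * r)]
        gcongr
        exact gaussPi_tail hm hσ hr1
  have hE0 : 0 ≤ E := (Real.exp_pos _).le
  have hr0 : 0 ≤ 1 - m * κ * r := by linarith
  have hm2 : (0:ℝ) ≤ (m - 1) ^ 2 := sq_nonneg _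
  rw [ENNReal.ofReal_add (by positivity) (by positivity),
    ENNReal.ofReal_add (by positivity) (by positivity),
    ENNReal.ofReal_add (by positivity) (by positivity),
    ENNReal.ofReal_add (by positivity) (by positivity),
    ENNReal.ofReal_mul (p := m * κ) (by positivity), ← hN, mul_add, hsplit]
  calc _ ≤ _ := add_le_add_right hout _
    _ = _ := ?_
    _ ≤ _ := add_le_add (add_le_add (add_le_add (add_le_add
        (add_le_add hI14 (le_refl (ENNReal.ofReal (m * κ) * NC))) hI5) hI2) hI3)
        (le_refl (ENNReal.ofReal ((1 - m * κ * r) * E)))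
  ac_rfl
end

/-! ### Total variation and conclusion -/

section
/-- A one-sided bound for all measurable sets suffices, by passing to complements. -/
lemma l1Dist_le_of_forall_le {E : Type*} [MeasurableSpace E] {P Q : Measure E}
    [IsProbabilityMeasure P] [IsProbabilityMeasure Q] {ε : ℝ} (hε : 0 ≤ ε)
    (h : ∀ A, MeasurableSet A → P A ≤ Q A + ENNReal.ofReal ε) : l1Dist P Q ≤ 2 * ε := by
  have h1 : ∀ A, MeasurableSet A → P.real A ≤ Q.real A + ε := by
    intro A hA
    have := ENNReal.toReal_mono (by finiteness) (h A hA)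
    rwa [ENNReal.toReal_add (by finiteness) (by finiteness), ENNReal.toReal_ofReal hε] at this
  have : Nonempty {s : Set E // MeasurableSet s} := ⟨⟨∅, .empty⟩⟩
  refine mul_le_mul_of_nonneg_left (ciSup_le fun A => ?_) zero_le_two
  have hA := h1 A.1 A.2
  have hAc := h1 A.1ᶜ A.2.compl
  rw [probReal_compl_eq_one_sub A.2, probReal_compl_eq_one_sub A.2] at hAc
  change |P.real A.1 - Q.real A.1| ≤ ε
  rw [abs_le]
  constructor <;> linarith

/-- Uses `m (m - 1) + m (m - 1)² / 2 = m (m² - 1) / 2 ≤ m³ / 2` and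
`(1 + m B₁) B₂ = (1 - m² B₁²) κ ≤ κ`, where `κ = B₂ / (1 - m B₁)`. -/
lemma eps_le {m σ B₁ B₂ r s E : ℝ} (hm : 1 ≤ m) (hσ : 0 < σ) (hB₁ : 0 < B₁) (hB₂ : 0 < B₂)
    (hmB : m * B₁ < 1) (hr : 0 ≤ r) (hs : 0 ≤ s) (hE : 0 ≤ E) :
    m * (B₂ / (1 - m * B₁)) * (m * s) + (m - 1) * (B₂ / (1 - m * B₁)) * (m * s) +
        m * (B₂ / (1 - m * B₁) / (2 * σ) * (s * ((m - 1) ^ 2 * σ))) +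
        m * ((B₂ / (1 - m * B₁)) ^ 2 * m ^ 4 / (8 * σ) * (3 * σ ^ 2)) +
        (1 - m * (B₂ / (1 - m * B₁)) * r) * E ≤
      (4 * (m + 2) * m ^ 2 * B₂ * s / (1 - m * B₁) +
          3 * m ^ 5 * B₂ ^ 2 * σ / (1 - m * B₁) ^ 2) / 8 +
        (1 - (1 + m * B₁) * B₂ * m * r) * E := by
  have ha : 0 < 1 - m * B₁ := by linarith
  set κ := B₂ / (1 - m * B₁) with hκ
  have hκ0 : 0 < κ := by positivity
  have hB : B₂ = κ * (1 - m * B₁) := by rw [hκ]; field_simp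
  have e1 : 4 * (m + 2) * m ^ 2 * B₂ * s / (1 - m * B₁) = 4 * (m + 2) * m ^ 2 * κ * s := by
    rw [hκ]; field_simp
  have e2 : 3 * m ^ 5 * B₂ ^ 2 * σ / (1 - m * B₁) ^ 2 = 3 * m ^ 5 * κ ^ 2 * σ := by
    rw [hκ]; field_simp
  have e3 : m * (κ / (2 * σ) * (s * ((m - 1) ^ 2 * σ))) = m * κ * s * (m - 1) ^ 2 / 2 := by
    field_simp
  have e4 : m * (κ ^ 2 * m ^ 4 / (8 * σ) * (3 * σ ^ 2)) = 3 * m ^ 5 * κ ^ 2 * σ / 8 := by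
    field_simp
  rw [e1, e2, e3, e4]
  have h1 : (1 - m * κ * r) * E ≤ (1 - (1 + m * B₁) * B₂ * m * r) * E := by
    refine mul_le_mul_of_nonneg_right ?_ hE
    have : (1 + m * B₁) * B₂ * m * r = m * κ * r - (m * B₁) ^ 2 * (m * κ * r) := by rw [hB]; ring
    rw [this]
    have : 0 ≤ (m * B₁) ^ 2 * (m * κ * r) := by positivity
    linarith
  have h2 : 0 ≤ m * κ * s := by positivity
  nlinarith
end

theorem stmt16 (m : ℕ) (hm : 0 < m) (σ B₁ B₂ r : ℝ) (hσ : 0 < σ) (hB₁ : 0 < B₁)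
    (hB₂ : 0 < B₂) (hmB₁ : (m : ℝ) < 1 / B₁)
    (hr1 : m * Real.sqrt (2 * σ / Real.pi) < r) (hr2 : r ≤ (1 - m * B₁) / (m * B₂))
    (f : (Fin m → ℝ) → Fin m → ℝ) (hf : ContDiff ℝ 2 f)
    (hd1 : ∀ i j : Fin m, |fderiv ℝ (fun x => f x i) 0 (Pi.single j 1)| ≤ B₁)
    (hd2 : ∀ (i j j' : Fin m) (x : Fin m → ℝ), (∑ k, |x k|) < r →
      |fderiv ℝ (fun y => fderiv ℝ (fun w => f w i) y (Pi.single j 1)) x (Pi.single j' 1)|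
        ≤ B₂) :
    IsBlurring m ((1 - m * B₁) ^ 2 * σ)
      ((4 * (m + 2) * m ^ 2 * B₂ * Real.sqrt (2 * σ / Real.pi) / (1 - m * B₁) +
          3 * m ^ 5 * B₂ ^ 2 * σ / (1 - m * B₁) ^ 2) / 8 +
        (1 - (1 + m * B₁) * B₂ * m * r) *
          Real.exp (-(r / (2 * Real.sqrt σ) - m / Real.sqrt (2 * Real.pi)) ^ 2 / m))
      ((gaussPi m 0 σ).map fun x => x + f x) := by
  have hm' : (0:ℝ) < m := by exact_mod_cast hm
  have hm1 : (1:ℝ) ≤ m := by exact_mod_cast hm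
  have hmB : m * B₁ < 1 := (lt_div_iff₀ hB₁).1 hmB₁
  have ha : 0 < 1 - m * B₁ := by linarith
  have hr0 : 0 ≤ r := le_trans (by positivity) hr1.le
  obtain ⟨T, c, u, hT, hdecomp, hu, hu0, hbd⟩ :=
    exists_reduction hB₁ hB₂ hm hmB f hf hd1 hd2
  obtain ⟨Phat, hPhat, hmap⟩ := exists_blur hσ.le hB₁ hm hmB T c hT
  set κ := B₂ / (1 - m * B₁) with hκ
  have hκ0 : 0 < κ := by positivity
  have hκr : m * κ * r ≤ 1 := by
    rw [le_div_iff₀ (by positivity)] at hr2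
    rw [hκ, mul_div_assoc', div_mul_eq_mul_div, div_le_one ha]
    linarith
  have hud : Differentiable ℝ u := hu.differentiable one_ne_zero
  have hinj := injOn_of_bound hud hκ0 hm hκr hbd
  have hL : Measurable fun x => T x + c := by fun_prop
  have hh : Measurable fun x => x + u x := (continuous_id.add hud.continuous).measurable
  have hP : ((gaussPi m 0 σ).map fun x => x + f x) =
      ((gaussPi m 0 σ).map fun x => x + u x).map fun x => T x + c := by
    rw [Measure.map_map hL hh]
    congr 1
    exact funext hdecomp
  have key := lintegral_defect_add_le hm hσ hκ0 hκr hr1 hu hbd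
  have heps := eps_le hm1 hσ hB₁ hB₂ hmB hr0 (Real.sqrt_nonneg (2 * σ / Real.pi))
    (Real.exp_pos (-(r / (2 * Real.sqrt σ) - m / Real.sqrt (2 * Real.pi)) ^ 2 / m)).le
  have hE := (Real.exp_pos (-(r / (2 * Real.sqrt σ) - m / Real.sqrt (2 * Real.pi)) ^ 2 / m)).le
  have hm0 : (0:ℝ) ≤ m - 1 := by linarith
  have hκr' : 0 ≤ 1 - m * κ * r := by linarith
  refine ⟨Phat, hPhat, ?_⟩
  rw [← hmap, hP]
  have : IsProbabilityMeasure ((gaussPi m 0 σ).map fun x => x + u x) :=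
    Measure.isProbabilityMeasure_map hh.aemeasurable
  have : IsProbabilityMeasure ((gaussPi m 0 σ).map fun x => T x + c) :=
    Measure.isProbabilityMeasure_map hL.aemeasurable
  have : IsProbabilityMeasure (((gaussPi m 0 σ).map fun x => x + u x).map fun x => T x + c) :=
    Measure.isProbabilityMeasure_map hL.aemeasurable
  refine l1Dist_le_of_forall_le (le_trans (by positivity) heps) fun A hA => ?_
  rw [Measure.map_apply hL hA, Measure.map_apply hL hA, Measure.map_apply hh (hL hA)]
  refine (change_of_variables hσ hud hinj (defect m σ κ u) (measurable_defect hu)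
    (defect_pointwise hm hσ hκ0 hκr hud hu0 hbd) (hL hA)).trans ?_
  gcongr
  exact key.trans (ENNReal.ofReal_le_ofReal heps)
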